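/- arXiv:1905.07983 — 2 statements merged into one kernel-verified Lean document; each statement's English description precedes it below -/
import Mathlib

section
/- Let N ≥ 1, a ≥ 0, b > 0, and set α = a+b−1 and β = b−1. For each κ > 0 let X̃_κ be a random vector with distribution μ̃_κ (the trigonometric β-Jacobi ensemble), let z_1 < ... < z_N be the ordered zeros of the Jacobi polynomial P_N^{(α,β)}, and let t* = ((1/2)arccos(z_1), ..., (1/2)arccos(z_N)). Then the N×N matrix S̃ with entries s̃_{j,j} = 4Σ_{l≠j}(1−z_j²)/(z_j−z_l)² + 2(a+b)(1+z_j)/(1−z_j) + 2b(1−z_j)/(1+z_j) and s̃_{i,j} = −4√((1−z_i²)(1−z_j²))/(z_i−z_j)² for i ≠ j is positive definite, and √κ·(X̃_κ − t*) converges in distribution as κ → ∞ to the centered N-dimensional normal distribution with covariance matrix S̃^{−1}. -/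
open MeasureTheory Filter Real Finset Topology

/-!
The zeros of the Jacobi polynomial `P = (X - ξ) Q` satisfy the Stieltjes equilibrium equations:
orthogonality of `P` evaluates the integral of `Q R` against the Jacobi weight as a multiple of
`R(ξ)`, and integrating the derivative of `Q ^ 2 (1 - x) ^ (α + 1) (1 + x) ^ (β + 1)` turns this
into the Jacobi differential equation at `ξ`. In the coordinates `z = cos 2t`, equilibrium says that
`t*` is a critical point of the logarithm `U` of the density at `κ = 1`.

Since `cos 2v - cos 2u = 2 sin (u + v) sin (u - v)`, the function `U` is a sum of terms `log sin`
and `log cos` of linear forms in `t`, whose second derivatives are at most `-1`. Hence `U` lies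
below `U(t*) - c |t - t*| ^ 2` on the alcove, with `c = (a + 2b) / 2 > 0`, and its second order
term at `t*` is `-xᵀ S̃ x / 2`, where the equilibrium equations bring the Hessian into the form
`-S̃`. The comparison of the two gives positive definiteness of `S̃`. After rescaling by `√κ`, the
density `exp (κ U)` is dominated by `exp (-c |x| ^ 2)` and converges to `exp (-xᵀ S̃ x / 2)`, so
dominated convergence yields the central limit theorem.
-/

section JacobiPolynomial

open Polynomial

variable {α β : ℝ}

/-- The integral of a polynomial against the Jacobi weight `(1 - x) ^ α * (1 + x) ^ β` on
`(-1, 1)`, the moment functional for which Jacobi polynomials are orthogonal. -/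
noncomputable def jacobiIntegral (α β : ℝ) (R : ℝ[X]) : ℝ :=
  ∫ x in Set.Ioo (-1 : ℝ) 1, R.eval x * (1 - x) ^ α * (1 + x) ^ β

lemma intervalIntegrable_jacobiWeight (hα : -1 < α) (hβ : -1 < β) :
    IntervalIntegrable (fun x : ℝ => (1 - x) ^ α * (1 + x) ^ β) volume (-1) 1 := by
  have integrable_left : IntervalIntegrable (fun x : ℝ => (1 + x) ^ β) volume (-1) 0 := by
    simpa using (intervalIntegral.intervalIntegrable_rpow' (a := 0) (b := 1) hβ).comp_add_left 1
  have integrable_right : IntervalIntegrable (fun x : ℝ => (1 - x) ^ α) volume 0 1 := by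
    simpa using
      (intervalIntegral.intervalIntegrable_rpow' (a := 0) (b := 1) hα).symm.comp_sub_left 1
  have continuous_left : ContinuousOn (fun x : ℝ => (1 - x) ^ α) (Set.uIcc (-1) 0) := by
    refine (by fun_prop : Continuous fun x : ℝ => 1 - x).continuousOn.rpow_const fun x hx => ?_
    rw [Set.uIcc_of_le (by norm_num)] at hx
    exact .inl (by linarith [hx.2])
  have continuous_right : ContinuousOn (fun x : ℝ => (1 + x) ^ β) (Set.uIcc 0 1) := by
    refine (by fun_prop : Continuous fun x : ℝ => 1 + x).continuousOn.rpow_const fun x hx => ?_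
    rw [Set.uIcc_of_le (by norm_num)] at hx
    exact .inl (by linarith [hx.1])
  exact (integrable_left.continuousOn_mul continuous_left).trans
    (integrable_right.mul_continuousOn continuous_right)

lemma intervalIntegrable_eval_mul_jacobiWeight (hα : -1 < α) (hβ : -1 < β) (R : ℝ[X]) :
    IntervalIntegrable (fun x : ℝ => R.eval x * (1 - x) ^ α * (1 + x) ^ β) volume (-1) 1 := by
  simpa only [mul_assoc] using
    (intervalIntegrable_jacobiWeight hα hβ).continuousOn_mul R.continuous.continuousOn

lemma integrableOn_eval_mul_jacobiWeight (hα : -1 < α) (hβ : -1 < β) (R : ℝ[X]) :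
    IntegrableOn (fun x : ℝ => R.eval x * (1 - x) ^ α * (1 + x) ^ β) (Set.Ioo (-1) 1) :=
  (intervalIntegrable_iff_integrableOn_Ioo_of_le (by norm_num)).1
    (intervalIntegrable_eval_mul_jacobiWeight hα hβ R)

lemma jacobiIntegral_add (hα : -1 < α) (hβ : -1 < β) (R T : ℝ[X]) :
    jacobiIntegral α β (R + T) = jacobiIntegral α β R + jacobiIntegral α β T := by
  simp only [jacobiIntegral, eval_add, add_mul]
  exact integral_add (integrableOn_eval_mul_jacobiWeight hα hβ R)
    (integrableOn_eval_mul_jacobiWeight hα hβ T)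

lemma jacobiIntegral_C_mul (r : ℝ) (R : ℝ[X]) :
    jacobiIntegral α β (C r * R) = r * jacobiIntegral α β R := by
  simp only [jacobiIntegral, eval_mul, eval_C, mul_assoc]
  exact integral_const_mul _ _

lemma jacobiIntegral_mul_self_pos (hα : -1 < α) (hβ : -1 < β) {Q : ℝ[X]} (hQ : Q ≠ 0) :
    0 < jacobiIntegral α β (Q * Q) := by
  have weight_pos : ∀ x ∈ Set.Ioo (-1 : ℝ) 1, 0 < (1 - x) ^ α * (1 + x) ^ β := fun x hx =>
    mul_pos (rpow_pos_of_pos (by linarith [hx.2]) _) (rpow_pos_of_pos (by linarith [hx.1]) _)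
  have support_superset : Set.Ioo (-1 : ℝ) 1 \ (Q.roots.toFinset : Set ℝ) ⊆
      Function.support (fun x : ℝ => (Q * Q).eval x * (1 - x) ^ α * (1 + x) ^ β) ∩
        Set.Ioo (-1) 1 := by
    intro x hx
    have hQx : Q.eval x ≠ 0 := fun h => hx.2 (by simp [hQ, h])
    refine ⟨?_, hx.1⟩
    simp only [Function.mem_support, eval_mul, mul_assoc]
    exact mul_ne_zero hQx (mul_ne_zero hQx (weight_pos x hx.1).ne')
  rw [jacobiIntegral, setIntegral_pos_iff_support_of_nonneg_ae _
    (integrableOn_eval_mul_jacobiWeight hα hβ _)]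
  · refine lt_of_lt_of_le ?_ (measure_mono support_superset)
    rw [measure_sdiff_null ((Finset.finite_toSet _).measure_zero _)]
    simp
  · refine (ae_restrict_iff' measurableSet_Ioo).2 (Eventually.of_forall fun x hx => ?_)
    simp only [Pi.zero_apply, eval_mul, mul_assoc (_ * _)]
    exact mul_nonneg (mul_self_nonneg _) (weight_pos x hx).le

/- The integrand is the derivative of `R(x) (1 - x) ^ (α + 1) (1 + x) ^ (β + 1)`, which vanishes at
both endpoints. -/
lemma jacobiIntegral_pearson (hα : -1 < α) (hβ : -1 < β) (R : ℝ[X]) :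
    jacobiIntegral α β (derivative R * (1 - X ^ 2) +
      R * (C (β + 1) * (1 - X) - C (α + 1) * (1 + X))) = 0 := by
  rw [jacobiIntegral, ← integral_Ioc_eq_integral_Ioo,
    ← intervalIntegral.integral_of_le (by norm_num),
    intervalIntegral.integral_eq_sub_of_hasDerivAt_of_le (by norm_num)
      (f := fun x => R.eval x * ((1 - x) ^ (α + 1) * (1 + x) ^ (β + 1))) ?_ ?_
      (intervalIntegrable_eval_mul_jacobiWeight hα hβ _)]
  · simp [zero_rpow (by linarith : α + 1 ≠ 0), zero_rpow (by linarith : β + 1 ≠ 0)]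
  · have continuous_left : Continuous fun x : ℝ => (1 - x) ^ (α + 1) :=
      (by fun_prop : Continuous fun x : ℝ => 1 - x).rpow_const fun _ => .inr (by linarith)
    have continuous_right : Continuous fun x : ℝ => (1 + x) ^ (β + 1) :=
      (by fun_prop : Continuous fun x : ℝ => 1 + x).rpow_const fun _ => .inr (by linarith)
    exact (R.continuous.mul (continuous_left.mul continuous_right)).continuousOn
  · intro x hx
    have one_sub_ne : 1 - x ≠ 0 := by linarith [hx.2]
    have one_add_ne : 1 + x ≠ 0 := by linarith [hx.1]
    have deriv_left := ((hasDerivAt_id x).const_sub 1).rpow_const (p := α + 1) (.inl one_sub_ne)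
    have deriv_right := ((hasDerivAt_id x).const_add 1).rpow_const (p := β + 1) (.inl one_add_ne)
    refine ((R.hasDerivAt x).mul (deriv_left.mul deriv_right)).congr_deriv ?_
    simp only [id, Pi.mul_apply, add_sub_cancel_right, rpow_add_one one_sub_ne,
      rpow_add_one one_add_ne, eval_add, eval_mul, eval_sub, eval_one, eval_pow, eval_X, eval_C]
    ring

/- Gauss quadrature with the single node `ξ`: the difference `R - R(ξ)` is divisible by `X - ξ`. -/
lemma jacobiIntegral_mul_eq_eval_mul (hα : -1 < α) (hβ : -1 < β) {Q R : ℝ[X]} {ξ : ℝ} {n : ℕ}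
    (horth : ∀ T : ℝ[X], T.natDegree < n → jacobiIntegral α β ((X - C ξ) * Q * T) = 0)
    (hn : n ≠ 0) (hR : R.natDegree ≤ n) :
    jacobiIntegral α β (Q * R) = R.eval ξ * jacobiIntegral α β Q := by
  have natDegree_quotient : (R /ₘ (X - C ξ)).natDegree < n := by
    rw [natDegree_divByMonic _ (monic_X_sub_C _), natDegree_X_sub_C]
    omega
  have division : Q * R = C (R.eval ξ) * Q + (X - C ξ) * Q * (R /ₘ (X - C ξ)) := by
    conv_lhs => rw [← modByMonic_add_div R (X - C ξ), modByMonic_X_sub_C_eq_C_eval]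
    ring
  rw [division, jacobiIntegral_add hα hβ, jacobiIntegral_C_mul, horth _ natDegree_quotient,
    add_zero]

/- At a zero `ξ` of `P = (X - ξ) Q` the derivatives of `P` are `Q(ξ)` and `2 * (derivative Q)(ξ)`,
so this is the Jacobi differential equation. It follows by applying the quadrature rule to the
Pearson identity for `Q ^ 2`. -/
lemma jacobi_differential_equation_at_root (hα : -1 < α) (hβ : -1 < β) {Q : ℝ[X]} (hQ : Q ≠ 0)
    {ξ : ℝ} (horth : ∀ T : ℝ[X], T.natDegree < Q.natDegree + 1 →
      jacobiIntegral α β ((X - C ξ) * Q * T) = 0) :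
    2 * (derivative Q).eval ξ * (1 - ξ ^ 2) +
      Q.eval ξ * ((β + 1) * (1 - ξ) - (α + 1) * (1 + ξ)) = 0 := by
  have quadrature {R : ℝ[X]} (hR : R.natDegree ≤ Q.natDegree + 1) :=
    jacobiIntegral_mul_eq_eval_mul hα hβ horth Q.natDegree.succ_ne_zero hR
  have jacobiIntegral_ne_zero : jacobiIntegral α β Q ≠ 0 := fun h =>
    (jacobiIntegral_mul_self_pos hα hβ hQ).ne' (by rw [quadrature (Nat.le_succ _), h, mul_zero])
  set R : ℝ[X] := C 2 * derivative Q * (1 - X ^ 2) +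
    Q * (C (β + 1) * (1 - X) - C (α + 1) * (1 + X)) with hRdef
  have pearson : jacobiIntegral α β (Q * R) = 0 := by
    rw [← jacobiIntegral_pearson hα hβ (Q * Q), hRdef, derivative_mul]
    congr 1
    rw [map_ofNat]
    ring
  have natDegree_R : R.natDegree ≤ Q.natDegree + 1 := by
    refine natDegree_add_le_of_degree_le ?_ ?_
    · rcases Nat.eq_zero_or_pos Q.natDegree with h | h
      · simp [derivative_of_natDegree_zero h]
      · have natDegree_deriv := (natDegree_C_mul_le 2 (derivative Q)).trans
          (natDegree_derivative_le Q)
        have natDegree_one_sub_sq : (1 - X ^ 2 : ℝ[X]).natDegree ≤ 2 := by compute_degree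
        exact (natDegree_mul_le_of_le natDegree_deriv natDegree_one_sub_sq).trans (by omega)
    · exact natDegree_mul_le_of_le le_rfl (by compute_degree)
  rw [quadrature natDegree_R] at pearson
  simpa [hRdef] using (mul_eq_zero.1 pearson).resolve_right jacobiIntegral_ne_zero

variable {ι K : Type*} [Fintype ι] [Field K]

lemma eq_C_leadingCoeff_mul_prod_X_sub_C {P : K[X]} (hP : P.natDegree = Fintype.card ι)
    {z : ι → K} (hz : Function.Injective z) (hroot : ∀ i, P.IsRoot (z i)) :
    P = C P.leadingCoeff * ∏ i, (X - C (z i)) := by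
  refine eq_leadingCoeff_mul_of_monic_of_dvd_of_natDegree_le
    (monic_prod_of_monic _ _ fun i _ => monic_X_sub_C _) ?_ ?_
  · exact prod_dvd_of_coprime ((pairwise_coprime_X_sub_C hz).set_pairwise _) fun i _ =>
      dvd_iff_isRoot.2 (hroot i)
  · rw [natDegree_prod_of_monic _ _ fun i _ => monic_X_sub_C _]
    simp [hP]

variable [DecidableEq ι]

lemma eval_prod_erase_ne_zero {z : ι → K} (hz : Function.Injective z) (i : ι) :
    (∏ j ∈ univ.erase i, (X - C (z j))).eval (z i) ≠ 0 := by
  rw [eval_prod, prod_ne_zero_iff]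
  intro j hj
  simpa [sub_eq_zero] using fun h => ne_of_mem_erase hj (hz h).symm

lemma eval_derivative_prod_erase {z : ι → K} (hz : Function.Injective z) (i : ι) :
    (derivative (∏ j ∈ univ.erase i, (X - C (z j)))).eval (z i) =
      (∏ j ∈ univ.erase i, (X - C (z j))).eval (z i) *
        ∑ j ∈ univ.erase i, 1 / (z i - z j) := by
  rw [derivative_prod_finset, eval_finsetSum, mul_sum]
  refine sum_congr rfl fun j hj => ?_
  have hij : z i - z j ≠ 0 := sub_ne_zero.2 fun h => ne_of_mem_erase hj (hz h).symm
  rw [← mul_prod_erase _ _ hj]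
  simp only [derivative_sub, derivative_X, derivative_C, sub_zero, mul_one, eval_mul, eval_sub,
    eval_X, eval_C]
  field_simp

/-- The Stieltjes electrostatic equilibrium: unit charges at the points `z i` of `(-1, 1)` are in
equilibrium with charges `(a + b) / 2` at `1` and `b / 2` at `-1`. The equations are multiplied by
`2 * (1 - z i ^ 2)`. -/
def IsStieltjesEquilibrium (a b : ℝ) (z : ι → ℝ) : Prop :=
  ∀ i, 2 * (1 - z i ^ 2) * ∑ j ∈ univ.erase i, 1 / (z i - z j) =
    (a + b) * (1 + z i) - b * (1 - z i)

theorem isStieltjesEquilibrium_of_jacobi_roots {a b : ℝ} (hab : 0 < a + b) (hb : 0 < b)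
    {P : ℝ[X]} (hdeg : P.natDegree = Fintype.card ι)
    (horth : ∀ Q : ℝ[X], Q.natDegree < P.natDegree →
      jacobiIntegral (a + b - 1) (b - 1) (P * Q) = 0)
    {z : ι → ℝ} (hz : Function.Injective z) (hroot : ∀ i, P.IsRoot (z i)) :
    IsStieltjesEquilibrium a b z := by
  intro i
  set Q : ℝ[X] := ∏ j ∈ univ.erase i, (X - C (z j)) with hQ
  have Q_monic : Q.Monic := monic_prod_of_monic _ _ fun j _ => monic_X_sub_C _
  have card_pos : 0 < Fintype.card ι := Fintype.card_pos_iff.2 ⟨i⟩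
  have leadingCoeff_ne_zero : P.leadingCoeff ≠ 0 := by
    rw [leadingCoeff_ne_zero]
    rintro rfl
    simp [← hdeg] at card_pos
  have factorization : P = C P.leadingCoeff * ((X - C (z i)) * Q) := by
    rw [hQ, mul_prod_erase _ (fun j => X - C (z j)) (mem_univ i)]
    exact eq_C_leadingCoeff_mul_prod_X_sub_C hdeg hz hroot
  have natDegree_P : P.natDegree = Q.natDegree + 1 := by
    rw [hdeg, hQ, natDegree_prod_of_monic _ _ fun j _ => monic_X_sub_C _]
    simp only [natDegree_X_sub_C, sum_const, smul_eq_mul, mul_one, card_erase_of_mem (mem_univ i),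
      card_univ]
    omega
  have orthogonal : ∀ T : ℝ[X], T.natDegree < Q.natDegree + 1 →
      jacobiIntegral (a + b - 1) (b - 1) ((X - C (z i)) * Q * T) = 0 := by
    intro T hT
    have hPT := horth T (natDegree_P ▸ hT)
    rw [factorization, mul_assoc, jacobiIntegral_C_mul] at hPT
    exact (mul_eq_zero.1 hPT).resolve_left leadingCoeff_ne_zero
  have equation := jacobi_differential_equation_at_root (by linarith) (by linarith)
    Q_monic.ne_zero orthogonal
  rw [eval_derivative_prod_erase hz] at equation
  refine mul_left_cancel₀ (eval_prod_erase_ne_zero hz i) ?_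
  linear_combination equation

end JacobiPolynomial

section ConcaveExpansion

variable {E F : Type*} [AddCommGroup E] [Module ℝ E] [AddCommGroup F] [Module ℝ F]

/-- Second order expansion of a uniformly concave function `g` around `τ`: `L` is the differential
of `g` at `τ`, `B` bounds the decay of `g` below its tangent on `s`, and `-q` is the second order
term of `g` at `τ`. The limit is taken along `τ + x / √κ` as `κ → ∞`, the scale of the central
limit theorem. -/
structure HasConcaveExpansionOn (g : E → ℝ) (s : Set E) (τ : E) (L B q : E → ℝ) : Prop where
  le_tangent_sub : ∀ x, τ + x ∈ s → g (τ + x) ≤ g τ + L x - B x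
  tendsto_remainder : ∀ x, Tendsto
    (fun κ : ℝ => κ * (g (τ + (√κ)⁻¹ • x) - g τ - L ((√κ)⁻¹ • x))) atTop (𝓝 (-q x))

namespace HasConcaveExpansionOn

variable {g g₁ g₂ : E → ℝ} {s : Set E} {τ : E} {L L₁ L₂ B B₁ B₂ q q₁ q₂ : E → ℝ}

lemma const (c : ℝ) (s : Set E) (τ : E) : HasConcaveExpansionOn (fun _ => c) s τ 0 0 0 where
  le_tangent_sub x _ := by simp
  tendsto_remainder x := by simp

lemma add (h₁ : HasConcaveExpansionOn g₁ s τ L₁ B₁ q₁)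
    (h₂ : HasConcaveExpansionOn g₂ s τ L₂ B₂ q₂) :
    HasConcaveExpansionOn (g₁ + g₂) s τ (L₁ + L₂) (B₁ + B₂) (q₁ + q₂) where
  le_tangent_sub x hx := by
    simp only [Pi.add_apply]
    linarith [h₁.le_tangent_sub x hx, h₂.le_tangent_sub x hx]
  tendsto_remainder x := by
    simp only [Pi.add_apply, neg_add]
    refine ((h₁.tendsto_remainder x).add (h₂.tendsto_remainder x)).congr fun κ => ?_
    ring

lemma sum {k : Type*} (K : Finset k) {g L B q : k → E → ℝ}
    (h : ∀ i ∈ K, HasConcaveExpansionOn (g i) s τ (L i) (B i) (q i)) :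
    HasConcaveExpansionOn (∑ i ∈ K, g i) s τ (∑ i ∈ K, L i) (∑ i ∈ K, B i) (∑ i ∈ K, q i) := by
  classical
  induction K using Finset.induction_on with
  | empty => simpa using! const 0 s τ
  | insert i K hi ih =>
    simp only [sum_insert hi]
    exact (h i (mem_insert_self i K)).add (ih fun j hj => h j (mem_insert_of_mem hj))

lemma const_mul {c : ℝ} (hc : 0 ≤ c) (h : HasConcaveExpansionOn g s τ L B q) :
    HasConcaveExpansionOn (fun t => c * g t) s τ (fun x => c * L x) (fun x => c * B x)
      (fun x => c * q x) where
  le_tangent_sub x hx := by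
    linarith [mul_le_mul_of_nonneg_left (h.le_tangent_sub x hx) hc]
  tendsto_remainder x := by
    rw [← mul_neg]
    refine ((h.tendsto_remainder x).const_mul c).congr fun κ => ?_
    ring

lemma comp_linearMap {g L B q : F → ℝ} {s : Set F} (A : E →ₗ[ℝ] F)
    (h : HasConcaveExpansionOn g s (A τ) L B q) :
    HasConcaveExpansionOn (fun t => g (A t)) (A ⁻¹' s) τ (fun x => L (A x)) (fun x => B (A x))
      (fun x => q (A x)) where
  le_tangent_sub x hx := by
    rw [Set.mem_preimage, map_add] at hx
    simpa only [map_add] using h.le_tangent_sub (A x) hx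
  tendsto_remainder x := by simpa only [map_add, map_smul] using h.tendsto_remainder (A x)

lemma mono {s' : Set E} {B' : E → ℝ} (h : HasConcaveExpansionOn g s τ L B q) (hs : s' ⊆ s)
    (hB : ∀ x, B' x ≤ B x) : HasConcaveExpansionOn g s' τ L B' q where
  le_tangent_sub x hx := by linarith [h.le_tangent_sub x (hs hx), hB x]
  tendsto_remainder := h.tendsto_remainder

end HasConcaveExpansionOn

lemma tendsto_inv_sqrt_atTop : Tendsto (fun κ : ℝ => (√κ)⁻¹) atTop (𝓝 0) :=
  tendsto_inv_atTop_zero.comp tendsto_sqrt_atTop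

lemma tendsto_add_inv_sqrt_smul {V : Type*} [AddCommGroup V] [Module ℝ V] [TopologicalSpace V]
    [ContinuousAdd V] [ContinuousSMul ℝ V] (τ x : V) :
    Tendsto (fun κ : ℝ => τ + (√κ)⁻¹ • x) atTop (𝓝 τ) := by
  simpa using (tendsto_inv_sqrt_atTop.smul_const x).const_add τ

lemma HasConcaveExpansionOn.bound_le_quadratic {V : Type*} [AddCommGroup V] [Module ℝ V]
    [TopologicalSpace V] [ContinuousAdd V] [ContinuousSMul ℝ V] {g L B q : V → ℝ} {s : Set V}
    {τ : V} (h : HasConcaveExpansionOn g s τ L B q) (hs : IsOpen s) (hτ : τ ∈ s)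
    (hB : ∀ (c : ℝ) x, B (c • x) = c ^ 2 * B x) (x : V) : B x ≤ q x := by
  refine neg_le_neg_iff.1 (le_of_tendsto (h.tendsto_remainder x) ?_)
  filter_upwards [eventually_gt_atTop 0,
    (tendsto_add_inv_sqrt_smul τ x).eventually (hs.mem_nhds hτ)] with κ hκ hmem
  calc κ * (g (τ + (√κ)⁻¹ • x) - g τ - L ((√κ)⁻¹ • x))
      ≤ κ * -B ((√κ)⁻¹ • x) := by
        gcongr
        linarith [h.le_tangent_sub _ hmem]
    _ = -B x := by
        rw [hB, inv_pow, sq_sqrt hκ.le]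
        field_simp

variable {φ φ' φ'' : ℝ → ℝ} {s : Set ℝ} {u : ℝ}

lemma le_tangent_of_concaveOn {m v : ℝ} (hφ : ConcaveOn ℝ s φ) (hu : u ∈ s)
    (hv : v ∈ s) (hderiv : HasDerivAt φ m u) : φ v ≤ φ u + m * (v - u) := by
  rcases lt_trichotomy u v with h | rfl | h
  · have := hφ.slope_le_of_hasDerivAt hu hv h hderiv
    rw [slope_def_field, div_le_iff₀ (by linarith)] at this
    linarith
  · simp
  · have := hφ.le_slope_of_hasDerivAt hv hu h hderiv
    rw [slope_def_field, le_div_iff₀ (by linarith)] at this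
    linarith

lemma le_tangent_sub_sq_of_deriv2_le {c v : ℝ} (hs : Convex ℝ s)
    (hφ : ∀ x ∈ s, HasDerivAt φ (φ' x) x) (hφ' : ∀ x ∈ s, HasDerivAt φ' (φ'' x) x)
    (hc : ∀ x ∈ s, φ'' x ≤ -c) (hu : u ∈ s) (hv : v ∈ s) :
    φ v ≤ φ u + φ' u * (v - u) - c * (v - u) ^ 2 / 2 := by
  have deriv_add_sq : ∀ x ∈ s, HasDerivAt (fun x => φ x + c * (x ^ 2 / 2)) (φ' x + c * x) x :=
    fun x hx => ((hφ x hx).add (((hasDerivAt_pow 2 x).div_const 2).const_mul c)).congr_deriv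
      (by simp)
  have concave : ConcaveOn ℝ s fun x => φ x + c * (x ^ 2 / 2) := by
    refine concaveOn_of_hasDerivWithinAt2_nonpos hs (f'' := fun x => φ'' x + c)
      (fun x hx => (deriv_add_sq x hx).continuousAt.continuousWithinAt)
      (fun x hx => (deriv_add_sq x (interior_subset hx)).hasDerivWithinAt) (fun x hx => ?_)
      (fun x hx => by linarith [hc x (interior_subset hx)])
    simpa using! ((hφ' x (interior_subset hx)).add
      ((hasDerivAt_id x).const_mul c)).hasDerivWithinAt
  linarith [le_tangent_of_concaveOn concave hu hv (deriv_add_sq u hu)]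

lemma isLittleO_second_order_remainder (hs : Convex ℝ s) (hso : IsOpen s)
    (hφ : ∀ x ∈ s, HasDerivAt φ (φ' x) x) (hu : u ∈ s) {m : ℝ} (hφ' : HasDerivAt φ' m u) :
    (fun x => φ x - φ u - φ' u * (x - u) - m * (x - u) ^ 2 / 2) =o[𝓝 u]
      fun x => (x - u) ^ 2 := by
  have deriv_remainder : ∀ x ∈ s, HasDerivWithinAt
      (fun x => φ x - φ u - φ' u * (x - u) - m * (x - u) ^ 2 / 2)
      (φ' x - φ' u - m * (x - u)) s x := by
    intro x hx
    have hid := (hasDerivAt_id x).sub_const u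
    refine (((((hφ x hx).sub_const (φ u)).sub (hid.const_mul (φ' u))).sub
      (((hid.pow 2).const_mul m).div_const 2)).congr_deriv ?_).hasDerivWithinAt
    simp only [id]
    ring
  have deriv_isLittleO : (fun x => φ' x - φ' u - m * (x - u)) =o[𝓝[s] u] fun x => (x - u) ^ 1 := by
    simpa [mul_comm m] using hφ'.isLittleO.mono nhdsWithin_le_nhds
  simpa [hso.nhdsWithin_eq hu] using
    hs.isLittleO_pow_succ_real (n := 1) hu deriv_remainder deriv_isLittleO

lemma hasConcaveExpansionOn_of_deriv2_le {c : ℝ} (hs : Convex ℝ s) (hso : IsOpen s)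
    (hφ : ∀ x ∈ s, HasDerivAt φ (φ' x) x) (hφ' : ∀ x ∈ s, HasDerivAt φ' (φ'' x) x)
    (hc : ∀ x ∈ s, φ'' x ≤ -c) (hu : u ∈ s) :
    HasConcaveExpansionOn φ s u (fun x => φ' u * x) (fun x => c * x ^ 2 / 2)
      (fun x => -φ'' u * x ^ 2 / 2) where
  le_tangent_sub x hx := by
    simpa only [add_sub_cancel_left] using le_tangent_sub_sq_of_deriv2_le hs hφ hφ' hc hu hx
  tendsto_remainder x := by
    have along_scale := (isLittleO_second_order_remainder hs hso hφ hu (hφ' u hu)).comp_tendsto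
      (tendsto_add_inv_sqrt_smul u x)
    have scaled := (Asymptotics.isBigO_refl (fun κ : ℝ => κ) atTop).mul_isLittleO along_scale
    have sq_scale {κ : ℝ} (hκ : 0 < κ) : ((√κ)⁻¹ * x) ^ 2 = κ⁻¹ * x ^ 2 := by
      rw [mul_pow, inv_pow, sq_sqrt hκ.le]
    have remainder_isLittleO : (fun κ : ℝ => κ * (φ (u + (√κ)⁻¹ • x) - φ u
        - φ' u * ((√κ)⁻¹ • x)) - -(-φ'' u * x ^ 2 / 2)) =o[atTop] fun _ => x ^ 2 := by
      refine scaled.congr' ?_ ?_ <;> filter_upwards [eventually_gt_atTop 0] with κ hκ <;>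
        simp only [Function.comp, smul_eq_mul, add_sub_cancel_left, sq_scale hκ] <;> field_simp
    refine tendsto_sub_nhds_zero_iff.1 ((Asymptotics.isLittleO_one_iff ℝ).1 ?_)
    exact remainder_isLittleO.trans_isBigO (Asymptotics.isBigO_const_const _ one_ne_zero _)

lemma hasConcaveExpansionOn_log_sin (hu : u ∈ Set.Ioo 0 π) :
    HasConcaveExpansionOn (fun x => log (sin x)) (Set.Ioo 0 π) u (fun x => cos u / sin u * x)
      (fun x => x ^ 2 / 2) (fun x => x ^ 2 / sin u ^ 2 / 2) := by
  have sin_pos {x : ℝ} (hx : x ∈ Set.Ioo 0 π) : 0 < sin x := sin_pos_of_mem_Ioo hx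
  have deriv_cot : ∀ x ∈ Set.Ioo 0 π,
      HasDerivAt (fun x => cos x / sin x) (-(1 / sin x ^ 2)) x := by
    intro x hx
    refine ((hasDerivAt_cos x).div (hasDerivAt_sin x) (sin_pos hx).ne').congr_deriv ?_
    rw [← sin_sq_add_cos_sq x]
    ring
  have expansion := hasConcaveExpansionOn_of_deriv2_le (c := 1) (convex_Ioo 0 π) isOpen_Ioo
    (fun x hx => (hasDerivAt_sin x).log (sin_pos hx).ne') deriv_cot
    (fun x hx => neg_le_neg (one_le_one_div (pow_pos (sin_pos hx) 2) (sin_sq_le_one x))) hu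
  convert expansion using 2 <;> ring

lemma hasConcaveExpansionOn_log_cos (hu : u ∈ Set.Ioo (-(π / 2)) (π / 2)) :
    HasConcaveExpansionOn (fun x => log (cos x)) (Set.Ioo (-(π / 2)) (π / 2)) u
      (fun x => -tan u * x) (fun x => x ^ 2 / 2) (fun x => x ^ 2 / cos u ^ 2 / 2) := by
  have cos_pos {x : ℝ} (hx : x ∈ Set.Ioo (-(π / 2)) (π / 2)) : 0 < cos x := cos_pos_of_mem_Ioo hx
  have deriv_log_cos : ∀ x ∈ Set.Ioo (-(π / 2)) (π / 2),
      HasDerivAt (fun x => log (cos x)) (-tan x) x := fun x hx =>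
    ((hasDerivAt_cos x).log (cos_pos hx).ne').congr_deriv (by rw [tan_eq_sin_div_cos]; ring)
  have expansion := hasConcaveExpansionOn_of_deriv2_le (c := 1) (convex_Ioo _ _) isOpen_Ioo
    deriv_log_cos (fun x hx => (hasDerivAt_tan (cos_pos hx).ne').neg)
    (fun x hx => neg_le_neg (one_le_one_div (pow_pos (cos_pos hx) 2) (cos_sq_le_one x))) hu
  convert expansion using 2 <;> ring

end ConcaveExpansion

section LaplaceMethod

variable {V : Type*} [NormedAddCommGroup V] [NormedSpace ℝ V]

/-- The density `exp (κ * U)` on `Ω`, recentred at `τ`, rescaled by `√κ` and normalised to have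
value `1` at the centre. -/
noncomputable def rescaledDensity (U : V → ℝ) (Ω : Set V) (τ : V) (κ : ℝ) (x : V) : ℝ :=
  Ω.indicator (fun t => exp (κ * (U t - U τ))) (τ + (√κ)⁻¹ • x)

variable {U B q : V → ℝ} {Ω : Set V} {τ : V}

lemma rescaledDensity_le_exp (hU : HasConcaveExpansionOn U Ω τ 0 B q)
    (hB : ∀ (c : ℝ) x, B (c • x) = c ^ 2 * B x) {κ : ℝ} (hκ : 0 < κ) (x : V) :
    rescaledDensity U Ω τ κ x ≤ exp (-B x) := by
  refine Set.indicator_apply_le' (fun hx => exp_le_exp.2 ?_) fun _ => (exp_pos _).le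
  have decay := hU.le_tangent_sub _ hx
  simp only [Pi.zero_apply, add_zero, hB, inv_pow, sq_sqrt hκ.le] at decay
  calc κ * (U (τ + (√κ)⁻¹ • x) - U τ) ≤ κ * -(κ⁻¹ * B x) := by gcongr; linarith
    _ = -B x := by field_simp

lemma tendsto_rescaledDensity (hU : HasConcaveExpansionOn U Ω τ 0 B q) (hΩ : IsOpen Ω)
    (hτ : τ ∈ Ω) (x : V) :
    Tendsto (fun κ => rescaledDensity U Ω τ κ x) atTop (𝓝 (exp (-q x))) := by
  refine ((continuous_exp.tendsto _).comp (hU.tendsto_remainder x)).congr' ?_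
  filter_upwards [(tendsto_add_inv_sqrt_smul τ x).eventually (hΩ.mem_nhds hτ)] with κ hκ
  simp [rescaledDensity, Set.indicator_of_mem hκ]

variable [MeasurableSpace V] [BorelSpace V]

lemma measurable_rescaledDensity (hU : Measurable U) (hΩ : MeasurableSet Ω) (κ : ℝ) :
    Measurable (rescaledDensity U Ω τ κ) := by
  have rescale_measurable : Measurable fun x : V => τ + (√κ)⁻¹ • x := by fun_prop
  exact ((by fun_prop : Measurable fun t => exp (κ * (U t - U τ))).indicator hΩ).comp
    rescale_measurable

variable (μ : Measure V)

lemma tendsto_integral_mul_rescaledDensity (hUm : Measurable U)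
    (hU : HasConcaveExpansionOn U Ω τ 0 B q) (hΩ : IsOpen Ω) (hτ : τ ∈ Ω)
    (hB : ∀ (c : ℝ) x, B (c • x) = c ^ 2 * B x) (hBint : Integrable (fun x => exp (-B x)) μ)
    (f : BoundedContinuousFunction V ℝ) :
    Tendsto (fun κ => ∫ x, f x * rescaledDensity U Ω τ κ x ∂μ) atTop
      (𝓝 (∫ x, f x * exp (-q x) ∂μ)) := by
  refine tendsto_integral_filter_of_dominated_convergence (fun x => ‖f‖ * exp (-B x))
    (Eventually.of_forall fun κ => (f.continuous.measurable.mul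
      (measurable_rescaledDensity hUm hΩ.measurableSet κ)).aestronglyMeasurable) ?_
    (hBint.const_mul _)
    (Eventually.of_forall fun x => (tendsto_rescaledDensity hU hΩ hτ x).const_mul _)
  filter_upwards [eventually_gt_atTop 0] with κ hκ
  refine Eventually.of_forall fun x => ?_
  have density_nonneg : 0 ≤ rescaledDensity U Ω τ κ x :=
    Set.indicator_nonneg (fun _ _ => (exp_pos _).le) _
  rw [norm_mul, norm_of_nonneg density_nonneg]
  exact mul_le_mul (f.norm_coe_le_norm x) (rescaledDensity_le_exp hU hB hκ x) density_nonneg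
    (norm_nonneg _)

variable [FiniteDimensional ℝ V] [μ.IsAddHaarMeasure]

lemma integral_eq_pow_mul_integral_comp_add_smul (F : V → ℝ) (τ : V) {c : ℝ} (hc : 0 < c) :
    ∫ t, F t ∂μ = c ^ Module.finrank ℝ V * ∫ x, F (τ + c • x) ∂μ := by
  rw [μ.integral_comp_smul (fun t => F (τ + t)) c, integral_add_left_eq_self F τ, smul_eq_mul,
    abs_of_pos (by positivity), mul_inv_cancel_left₀ (by positivity)]

lemma setIntegral_mul_exp_eq_integral_rescaledDensity (hΩ : MeasurableSet Ω) {κ : ℝ} (hκ : 0 < κ)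
    (f : V → ℝ) :
    ∫ t in Ω, f (√κ • (t - τ)) * exp (κ * U t) ∂μ =
      (√κ)⁻¹ ^ Module.finrank ℝ V * exp (κ * U τ) * ∫ x, f x * rescaledDensity U Ω τ κ x ∂μ := by
  have sqrt_ne : √κ ≠ 0 := (sqrt_pos.2 hκ).ne'
  rw [← integral_indicator hΩ, integral_eq_pow_mul_integral_comp_add_smul μ _ τ
    (inv_pos.2 (sqrt_pos.2 hκ)), mul_assoc, ← integral_const_mul (exp (κ * U τ))]
  congr 2 with x
  by_cases hx : τ + (√κ)⁻¹ • x ∈ Ω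
  · rw [rescaledDensity, Set.indicator_of_mem hx, Set.indicator_of_mem hx, add_sub_cancel_left,
      smul_inv_smul₀ sqrt_ne, mul_left_comm, ← exp_add]
    ring_nf
  · rw [rescaledDensity, Set.indicator_of_notMem hx, Set.indicator_of_notMem hx]
    simp

theorem tendsto_laplace_average (hUm : Measurable U) (hU : HasConcaveExpansionOn U Ω τ 0 B q)
    (hΩ : IsOpen Ω) (hτ : τ ∈ Ω) (hB : ∀ (c : ℝ) x, B (c • x) = c ^ 2 * B x)
    (hBint : Integrable (fun x => exp (-B x)) μ) (hq : ∫ x, exp (-q x) ∂μ ≠ 0)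
    (f : BoundedContinuousFunction V ℝ) :
    Tendsto (fun κ => (∫ t in Ω, f (√κ • (t - τ)) * exp (κ * U t) ∂μ) /
        ∫ t in Ω, exp (κ * U t) ∂μ) atTop
      (𝓝 ((∫ x, f x * exp (-q x) ∂μ) / ∫ x, exp (-q x) ∂μ)) := by
  have numerator := tendsto_integral_mul_rescaledDensity μ hUm hU hΩ hτ hB hBint f
  have denominator := tendsto_integral_mul_rescaledDensity μ hUm hU hΩ hτ hB hBint
    (BoundedContinuousFunction.const V 1)
  simp only [BoundedContinuousFunction.const_apply, one_mul] at denominator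
  refine (numerator.div denominator hq).congr' ?_
  filter_upwards [eventually_gt_atTop 0] with κ hκ
  have rescale := setIntegral_mul_exp_eq_integral_rescaledDensity (U := U) (τ := τ) μ
    hΩ.measurableSet hκ
  have rescale_one := rescale fun _ => 1
  simp only [one_mul] at rescale_one
  rw [rescale, rescale_one, mul_div_mul_left _ _ (by positivity)]
  rfl

end LaplaceMethod

section GaussianIntegral

open Matrix

variable {ι : Type*} [Fintype ι]

lemma sum_sum_mul_apply_mul_eq_dotProduct_mulVec {R : Type*} [CommSemiring R] (S : Matrix ι ι R)
    (x : ι → R) : ∑ i, ∑ j, x i * S i j * x j = x ⬝ᵥ S *ᵥ x := by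
  simp [dotProduct, mulVec, mul_sum, mul_assoc]

lemma integral_exp_neg_dotProduct_self_div_two :
    ∫ x : ι → ℝ, exp (-(x ⬝ᵥ x) / 2) = √(2 * π) ^ Fintype.card ι := by
  have exp_eq_prod (x : ι → ℝ) : exp (-(x ⬝ᵥ x) / 2) = ∏ i, exp (-(1 / 2) * x i ^ 2) := by
    rw [← exp_sum, ← mul_sum]
    simp only [dotProduct, sq]
    ring_nf
  simp_rw [exp_eq_prod]
  rw [integral_fintype_prod_volume_eq_prod fun _ y => exp (-(1 / 2) * y ^ 2)]
  simp only [integral_gaussian, prod_const, card_univ]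
  ring_nf

lemma mul_sum_sq_smul (c r : ℝ) (x : ι → ℝ) :
    c * ∑ i, (r • x) i ^ 2 = r ^ 2 * (c * ∑ i, x i ^ 2) := by
  simp only [Pi.smul_apply, smul_eq_mul, mul_pow, ← mul_sum]
  ring

lemma integrable_exp_neg_mul_sum_sq {c : ℝ} (hc : 0 < c) :
    Integrable fun x : ι → ℝ => exp (-(c * ∑ i, x i ^ 2)) := by
  simpa only [← exp_sum, ← mul_sum, sum_neg_distrib, neg_mul, volume_pi] using
    Integrable.fintype_prod fun _ : ι => integrable_exp_neg_mul_sq hc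

variable [DecidableEq ι]

open scoped MatrixOrder in
lemma integral_exp_neg_dotProduct_mulVec_div_two {S : Matrix ι ι ℝ} (hS : S.PosDef) :
    ∫ x : ι → ℝ, exp (-(x ⬝ᵥ S *ᵥ x) / 2) = √(2 * π) ^ Fintype.card ι / √S.det := by
  obtain ⟨A, rfl⟩ := CStarAlgebra.nonneg_iff_eq_star_mul_self.mp hS.posSemidef.nonneg
  rw [star_eq_conjTranspose, conjTranspose_eq_transpose_of_trivial] at hS ⊢
  have det_gram : (Aᵀ * A).det = A.det ^ 2 := by rw [det_mul, det_transpose, sq]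
  have det_ne_zero : A.det ≠ 0 := fun h =>
    hS.det_pos.ne' (by rw [det_gram, h, zero_pow two_ne_zero])
  have quadratic_eq (x : ι → ℝ) : x ⬝ᵥ (Aᵀ * A) *ᵥ x = toLin' A x ⬝ᵥ toLin' A x := by
    rw [← mulVec_mulVec, dotProduct_mulVec, vecMul_transpose, toLin'_apply]
  have substitution : ∫ x : ι → ℝ, exp (-(toLin' A x ⬝ᵥ toLin' A x) / 2) =
      ∫ y, exp (-(y ⬝ᵥ y) / 2) ∂volume.map (toLin' A) := by
    have gaussian_continuous : Continuous fun y : ι → ℝ => exp (-(y ⬝ᵥ y) / 2) := by fun_prop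
    exact (integral_map (toLin' A).continuous_of_finiteDimensional.aemeasurable
      gaussian_continuous.aestronglyMeasurable).symm
  simp_rw [quadratic_eq]
  rw [substitution, Real.map_matrix_volume_pi_eq_smul_volume_pi det_ne_zero, integral_smul_measure,
    integral_exp_neg_dotProduct_self_div_two, det_gram, sqrt_sq_eq_abs,
    ENNReal.toReal_ofReal (abs_nonneg _), abs_inv, smul_eq_mul, inv_mul_eq_div]

end GaussianIntegral

section PairInteraction

/-- The force exerted on a particle at `u` by one at `v`: the partial derivative of
`log (cos (2 * v) - cos (2 * u))` with respect to `u`. -/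
noncomputable def pairForce (u v : ℝ) : ℝ :=
  2 * sin (2 * u) / (cos (2 * v) - cos (2 * u))

/-- The contribution of a particle at `v` to the diagonal entry of `S̃` for one at `u`: minus the
second partial derivative of `log (cos (2 * v) - cos (2 * u))` with respect to `u`. -/
noncomputable def pairStiffness (u v : ℝ) : ℝ :=
  4 * (1 - cos (2 * u) * cos (2 * v)) / (cos (2 * u) - cos (2 * v)) ^ 2

/-- Minus the off-diagonal entry of `S̃` for particles at `u` and `v`: the mixed second partial
derivative of `log (cos (2 * v) - cos (2 * u))`. -/
noncomputable def pairCoupling (u v : ℝ) : ℝ :=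
  4 * (sin (2 * u) * sin (2 * v)) / (cos (2 * u) - cos (2 * v)) ^ 2

lemma pairStiffness_comm (u v : ℝ) : pairStiffness u v = pairStiffness v u := by
  rw [pairStiffness, pairStiffness, mul_comm (cos _), sub_sq_comm (cos _)]

lemma pairCoupling_comm (u v : ℝ) : pairCoupling u v = pairCoupling v u := by
  rw [pairCoupling, pairCoupling, mul_comm (sin _), sub_sq_comm (cos _)]

lemma two_mul_sin_add_mul_sin_sub (u v : ℝ) :
    2 * sin (u + v) * sin (u - v) = cos (2 * v) - cos (2 * u) := by
  rw [two_mul_sin_mul_sin]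
  ring_nf

variable {u v : ℝ}

lemma cot_add_add_cot_sub_eq_pairForce (hadd : sin (u + v) ≠ 0) (hsub : sin (u - v) ≠ 0) :
    cos (u + v) / sin (u + v) + cos (u - v) / sin (u - v) = pairForce u v := by
  have sin_two_mul_eq : sin (2 * u) = sin ((u + v) + (u - v)) := by ring_nf
  rw [pairForce, ← two_mul_sin_add_mul_sin_sub, sin_two_mul_eq, sin_add (u + v)]
  field_simp
  ring

lemma cot_add_sub_cot_sub_eq_pairForce (hadd : sin (u + v) ≠ 0) (hsub : sin (u - v) ≠ 0) :
    cos (u + v) / sin (u + v) - cos (u - v) / sin (u - v) = pairForce v u := by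
  have sub_swap : sin (v - u) = -sin (u - v) := by rw [← sin_neg, neg_sub]
  rw [← cot_add_add_cot_sub_eq_pairForce (by rwa [add_comm]) (by rwa [sub_swap, neg_ne_zero]),
    sub_swap, ← neg_sub u v, cos_neg, add_comm v u, div_neg, sub_eq_add_neg]

lemma one_div_sin_add_sq_add_eq_pairStiffness (hadd : sin (u + v) ≠ 0) (hsub : sin (u - v) ≠ 0) :
    1 / sin (u + v) ^ 2 + 1 / sin (u - v) ^ 2 = pairStiffness u v := by
  have one_sub_cos_mul_cos :
      1 - cos (2 * u) * cos (2 * v) = sin (u + v) ^ 2 + sin (u - v) ^ 2 := by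
    have product_to_sum := two_mul_cos_mul_cos (2 * u) (2 * v)
    rw [← mul_sub, ← mul_add, cos_two_mul (u - v), cos_two_mul (u + v)] at product_to_sum
    linarith [sin_sq (u + v), sin_sq (u - v)]
  rw [pairStiffness, one_sub_cos_mul_cos, sub_sq_comm, ← two_mul_sin_add_mul_sin_sub]
  field_simp
  ring

lemma one_div_sin_sub_sq_sub_eq_pairCoupling (hadd : sin (u + v) ≠ 0) (hsub : sin (u - v) ≠ 0) :
    1 / sin (u - v) ^ 2 - 1 / sin (u + v) ^ 2 = pairCoupling u v := by
  have sin_mul_sin : sin (2 * u) * sin (2 * v) = sin (u + v) ^ 2 - sin (u - v) ^ 2 := by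
    have product_to_sum := two_mul_sin_mul_sin (2 * u) (2 * v)
    rw [← mul_sub, ← mul_add, cos_two_mul (u - v), cos_two_mul (u + v)] at product_to_sum
    linarith [sin_sq (u + v), sin_sq (u - v)]
  rw [pairCoupling, sin_mul_sin, sub_sq_comm (cos _), ← two_mul_sin_add_mul_sin_sub]
  field_simp
  ring

end PairInteraction

section JacobiEnsemble

/-- The trigonometric alcove `π / 2 ≥ t_1 ≥ ⋯ ≥ t_N ≥ 0`, carrying the ensemble. -/
def trigAlcove (N : ℕ) : Set (Fin N → ℝ) :=
  {t | Antitone t ∧ ∀ i, t i ∈ Set.Icc 0 (π / 2)}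

/-- The interior of the trigonometric alcove, where the density is positive. -/
def openTrigAlcove (N : ℕ) : Set (Fin N → ℝ) :=
  {t | StrictAnti t ∧ ∀ i, t i ∈ Set.Ioo 0 (π / 2)}

variable {N : ℕ} {a b κ : ℝ} {t τ : Fin N → ℝ}

lemma isClosed_trigAlcove : IsClosed (trigAlcove N) := by
  simp only [trigAlcove, Set.ofPred_and, Set.ofPred_forall]
  exact isClosed_antitone.inter
    (isClosed_iInter fun i => isClosed_Icc.preimage (continuous_apply i))

lemma isOpen_openTrigAlcove : IsOpen (openTrigAlcove N) := by
  simp only [openTrigAlcove, StrictAnti, Set.ofPred_and, Set.ofPred_forall]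
  exact (isOpen_iInter_of_finite fun i => isOpen_iInter_of_finite fun j =>
      isOpen_iInter_of_finite fun _ => isOpen_lt (continuous_apply j) (continuous_apply i)).inter
    (isOpen_iInter_of_finite fun i => isOpen_Ioo.preimage (continuous_apply i))

lemma openTrigAlcove_subset_trigAlcove : openTrigAlcove N ⊆ trigAlcove N :=
  fun _ ht => ⟨ht.1.antitone, fun i => Set.Ioo_subset_Icc_self (ht.2 i)⟩

lemma apply_mem_Ioo_of_mem_openTrigAlcove (ht : t ∈ openTrigAlcove N) (i : Fin N) :
    t i ∈ Set.Ioo 0 π :=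
  ⟨(ht.2 i).1, by linarith [(ht.2 i).2, pi_pos]⟩

lemma two_mul_apply_mem_Ioo_of_mem_openTrigAlcove (ht : t ∈ openTrigAlcove N) (i : Fin N) :
    2 * t i ∈ Set.Ioo 0 π :=
  ⟨by linarith [(ht.2 i).1], by linarith [(ht.2 i).2]⟩

lemma apply_mem_Ioo_neg_of_mem_openTrigAlcove (ht : t ∈ openTrigAlcove N) (i : Fin N) :
    t i ∈ Set.Ioo (-(π / 2)) (π / 2) :=
  ⟨by linarith [(ht.2 i).1, pi_pos], (ht.2 i).2⟩

lemma add_mem_Ioo_of_mem_openTrigAlcove (ht : t ∈ openTrigAlcove N) (i j : Fin N) :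
    t i + t j ∈ Set.Ioo 0 π :=
  ⟨by linarith [(ht.2 i).1, (ht.2 j).1], by linarith [(ht.2 i).2, (ht.2 j).2]⟩

lemma sub_mem_Ioo_of_mem_openTrigAlcove (ht : t ∈ openTrigAlcove N) {i j : Fin N} (hij : i < j) :
    t i - t j ∈ Set.Ioo 0 π :=
  ⟨by linarith [ht.1 hij], by linarith [(ht.2 i).2, (ht.2 j).1, pi_pos]⟩

/-- The unnormalised density of the trigonometric β-Jacobi ensemble at inverse temperature `κ`. -/
noncomputable def trigJacobiWeight (a b κ : ℝ) (t : Fin N → ℝ) : ℝ :=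
  (∏ p : Fin N × Fin N with p.1 < p.2, (cos (2 * t p.2) - cos (2 * t p.1)) ^ κ) *
    ∏ i, (sin (t i) ^ (κ * a) * sin (2 * t i) ^ (κ * b))

/-- The logarithm of `trigJacobiWeight a b 1` on the open alcove, split into terms that are concave
functions of a linear form. -/
noncomputable def trigJacobiPotential (a b : ℝ) (t : Fin N → ℝ) : ℝ :=
  (∑ p : Fin N × Fin N with p.1 < p.2,
    (log 2 + log (sin (t p.1 + t p.2)) + log (sin (t p.1 - t p.2)))) +
  ∑ i, (b * log 2 + (a + b) * log (sin (t i)) + b * log (cos (t i)))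

lemma measurable_trigJacobiPotential (a b : ℝ) :
    Measurable (trigJacobiPotential a b : (Fin N → ℝ) → ℝ) := by
  unfold trigJacobiPotential
  fun_prop

lemma trigJacobiWeight_eq_exp (ht : t ∈ openTrigAlcove N) :
    trigJacobiWeight a b κ t = exp (κ * trigJacobiPotential a b t) := by
  rw [trigJacobiWeight, trigJacobiPotential, mul_add, exp_add, mul_sum, mul_sum, exp_sum, exp_sum]
  congr 1
  · refine prod_congr rfl fun p hp => ?_
    have sin_add_pos := sin_pos_of_mem_Ioo (add_mem_Ioo_of_mem_openTrigAlcove ht p.1 p.2)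
    have sin_sub_pos :=
      sin_pos_of_mem_Ioo (sub_mem_Ioo_of_mem_openTrigAlcove ht (mem_filter.1 hp).2)
    rw [← two_mul_sin_add_mul_sin_sub, rpow_def_of_pos (by positivity),
      log_mul (by positivity) (by positivity), log_mul (by positivity) (by positivity), mul_comm]
  · refine prod_congr rfl fun i _ => ?_
    have sin_pos := sin_pos_of_mem_Ioo (apply_mem_Ioo_of_mem_openTrigAlcove ht i)
    have cos_pos := cos_pos_of_mem_Ioo (apply_mem_Ioo_neg_of_mem_openTrigAlcove ht i)
    rw [sin_two_mul, rpow_def_of_pos sin_pos, rpow_def_of_pos (by positivity),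
      log_mul (by positivity) (by positivity), log_mul (by positivity) (by positivity), ← exp_add]
    ring_nf

lemma exists_lt_apply_eq_or_sin_two_mul_eq_zero (ht : t ∈ trigAlcove N \ openTrigAlcove N) :
    (∃ i j, i < j ∧ t i = t j) ∨ ∃ i, sin (2 * t i) = 0 := by
  by_contra! ⟨apply_ne, sin_ne⟩
  refine ht.2 ⟨fun i j hij => (ht.1.1 hij.le).lt_of_ne (apply_ne i j hij).symm, fun i => ⟨?_, ?_⟩⟩
  · refine (ht.1.2 i).1.lt_of_ne fun h => sin_ne i ?_
    rw [← h, mul_zero, sin_zero]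
  · refine (ht.1.2 i).2.lt_of_ne fun h => sin_ne i ?_
    rw [h, mul_div_cancel₀ π two_ne_zero, sin_pi]

lemma trigJacobiWeight_eq_zero (hb : 0 < b) (hκ : 0 < κ)
    (ht : t ∈ trigAlcove N \ openTrigAlcove N) : trigJacobiWeight a b κ t = 0 := by
  rcases exists_lt_apply_eq_or_sin_two_mul_eq_zero ht with ⟨i, j, hij, h⟩ | ⟨i, h⟩
  · rw [trigJacobiWeight, prod_eq_zero (i := (i, j)) (by simpa using hij), zero_mul]
    rw [h, sub_self, zero_rpow hκ.ne']
  · rw [trigJacobiWeight, prod_eq_zero (s := univ) (i := i) (mem_univ i), mul_zero]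
    rw [h, zero_rpow (by positivity), mul_zero]

lemma setIntegral_trigAlcove_mul_trigJacobiWeight (hb : 0 < b) (hκ : 0 < κ)
    (f : (Fin N → ℝ) → ℝ) :
    ∫ t in trigAlcove N, f t * trigJacobiWeight a b κ t =
      ∫ t in openTrigAlcove N, f t * exp (κ * trigJacobiPotential a b t) := by
  rw [setIntegral_eq_of_subset_of_forall_sdiff_eq_zero isClosed_trigAlcove.measurableSet
    openTrigAlcove_subset_trigAlcove fun t ht => by
      rw [trigJacobiWeight_eq_zero hb hκ ht, mul_zero]]
  exact setIntegral_congr_fun isOpen_openTrigAlcove.measurableSet fun t ht => by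
    simp only [trigJacobiWeight_eq_exp ht]

lemma sum_lt_add_swap_eq_sum_sum_erase {ι M : Type*} [Fintype ι] [LinearOrder ι]
    [LocallyFiniteOrderTop ι] [LocallyFiniteOrderBot ι] [AddCommMonoid M] (G : ι → ι → M) :
    ∑ p : ι × ι with p.1 < p.2, (G p.1 p.2 + G p.2 p.1) =
      ∑ i, ∑ j ∈ univ.erase i, G i j := by
  simp only [← compl_singleton, ← sum_sum_Ioi_add_eq_sum_sum_off_diag fun i j => G j i]
  simp only [sum_filter, Fintype.sum_prod_type, ← filter_lt_eq_Ioi]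

/-- The force of the external field on a particle at `u`: the derivative of
`(a + b) * log (sin u) + b * log (cos u)`. -/
noncomputable def siteForce (a b u : ℝ) : ℝ :=
  (a + b) * (cos u / sin u) - b * tan u

/-- The contribution of the external field to the diagonal entry of `S̃` for a particle at `u`:
minus the second derivative of `(a + b) * log (sin u) + b * log (cos u)`. -/
noncomputable def siteStiffness (a b u : ℝ) : ℝ :=
  (a + b) / sin u ^ 2 + b / cos u ^ 2

lemma hasConcaveExpansionOn_pair (hτ : τ ∈ openTrigAlcove N) {i j : Fin N} (hij : i < j) :
    HasConcaveExpansionOn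
      (fun t : Fin N → ℝ => log 2 + log (sin (t i + t j)) + log (sin (t i - t j)))
      (openTrigAlcove N) τ
      (fun x => pairForce (τ i) (τ j) * x i + pairForce (τ j) (τ i) * x j)
      0
      (fun x => (pairStiffness (τ i) (τ j) * (x i ^ 2 + x j ^ 2) -
        2 * pairCoupling (τ i) (τ j) * (x i * x j)) / 2) := by
  have add_mem := add_mem_Ioo_of_mem_openTrigAlcove hτ i j
  have sub_mem := sub_mem_Ioo_of_mem_openTrigAlcove hτ hij
  have sin_add_ne := (sin_pos_of_mem_Ioo add_mem).ne'
  have sin_sub_ne := (sin_pos_of_mem_Ioo sub_mem).ne'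
  have log_sin_add := (hasConcaveExpansionOn_log_sin add_mem).comp_linearMap (τ := τ)
    (LinearMap.proj (R := ℝ) (φ := fun _ => ℝ) i + LinearMap.proj j)
  have log_sin_sub := (hasConcaveExpansionOn_log_sin sub_mem).comp_linearMap (τ := τ)
    (LinearMap.proj (R := ℝ) (φ := fun _ => ℝ) i - LinearMap.proj j)
  have log_sin_add_on_alcove := log_sin_add.mono (B' := 0)
    (fun t ht => add_mem_Ioo_of_mem_openTrigAlcove ht i j)
    fun x => by simp only [Pi.zero_apply]; positivity
  have log_sin_sub_on_alcove := log_sin_sub.mono (B' := 0)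
    (fun t ht => sub_mem_Ioo_of_mem_openTrigAlcove ht hij)
    fun x => by simp only [Pi.zero_apply]; positivity
  convert ((HasConcaveExpansionOn.const (log 2) _ τ).add log_sin_add_on_alcove).add
    log_sin_sub_on_alcove using 1
  · rfl
  · ext x
    simp only [← cot_add_add_cot_sub_eq_pairForce sin_add_ne sin_sub_ne,
      ← cot_add_sub_cot_sub_eq_pairForce sin_add_ne sin_sub_ne, Pi.add_apply, Pi.zero_apply,
      LinearMap.add_apply, LinearMap.sub_apply, LinearMap.proj_apply]
    ring
  · simp only [add_zero]
  · ext x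
    simp only [← one_div_sin_add_sq_add_eq_pairStiffness sin_add_ne sin_sub_ne,
      ← one_div_sin_sub_sq_sub_eq_pairCoupling sin_add_ne sin_sub_ne, Pi.add_apply, Pi.zero_apply,
      LinearMap.add_apply, LinearMap.sub_apply, LinearMap.proj_apply]
    ring

lemma hasConcaveExpansionOn_site (hab : 0 ≤ a + b) (hb : 0 ≤ b) (hτ : τ ∈ openTrigAlcove N)
    (i : Fin N) :
    HasConcaveExpansionOn
      (fun t : Fin N → ℝ => b * log 2 + (a + b) * log (sin (t i)) + b * log (cos (t i)))
      (openTrigAlcove N) τ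
      (fun x => siteForce a b (τ i) * x i)
      (fun x => (a + 2 * b) / 2 * x i ^ 2)
      (fun x => siteStiffness a b (τ i) * x i ^ 2 / 2) := by
  have log_sin := (hasConcaveExpansionOn_log_sin
    (apply_mem_Ioo_of_mem_openTrigAlcove hτ i)).comp_linearMap (τ := τ)
      (LinearMap.proj i : (Fin N → ℝ) →ₗ[ℝ] ℝ)
  have log_cos := (hasConcaveExpansionOn_log_cos
    (apply_mem_Ioo_neg_of_mem_openTrigAlcove hτ i)).comp_linearMap (τ := τ)
      (LinearMap.proj i : (Fin N → ℝ) →ₗ[ℝ] ℝ)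
  have expansion := ((HasConcaveExpansionOn.const (b * log 2) (openTrigAlcove N) τ).add
    ((log_sin.mono (fun t ht => apply_mem_Ioo_of_mem_openTrigAlcove ht i)
      fun _ => le_rfl).const_mul hab)).add
    ((log_cos.mono (fun t ht => apply_mem_Ioo_neg_of_mem_openTrigAlcove ht i)
      fun _ => le_rfl).const_mul hb)
  convert expansion using 1 <;> ext x <;>
    simp only [siteForce, siteStiffness, Pi.add_apply, Pi.zero_apply, LinearMap.proj_apply] <;> ring

lemma hasConcaveExpansionOn_trigJacobiPotential (hab : 0 ≤ a + b) (hb : 0 ≤ b)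
    (hτ : τ ∈ openTrigAlcove N) :
    HasConcaveExpansionOn (trigJacobiPotential a b) (openTrigAlcove N) τ
      (fun x => ∑ i, (∑ j ∈ univ.erase i, pairForce (τ i) (τ j) + siteForce a b (τ i)) * x i)
      (fun x => (a + 2 * b) / 2 * ∑ i, x i ^ 2)
      (fun x => (∑ i, ((∑ j ∈ univ.erase i, pairStiffness (τ i) (τ j) + siteStiffness a b (τ i)) *
        x i ^ 2 - ∑ j ∈ univ.erase i, pairCoupling (τ i) (τ j) * (x i * x j))) / 2) := by
  have pairs := HasConcaveExpansionOn.sum {p : Fin N × Fin N | p.1 < p.2} fun p hp =>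
    hasConcaveExpansionOn_pair hτ (mem_filter.1 hp).2
  have sites := HasConcaveExpansionOn.sum univ fun i _ => hasConcaveExpansionOn_site hab hb hτ i
  convert pairs.add sites using 1
  · ext t
    simp [trigJacobiPotential]
  · ext x
    simp only [Pi.add_apply, Finset.sum_apply, add_mul, sum_mul, sum_add_distrib,
      ← sum_lt_add_swap_eq_sum_sum_erase fun i j => pairForce (τ i) (τ j) * x i]
  · ext x
    simp [mul_sum]
  · ext x
    have symmetrise := sum_lt_add_swap_eq_sum_sum_erase fun i j =>
      pairStiffness (τ i) (τ j) * x i ^ 2 - pairCoupling (τ i) (τ j) * (x i * x j)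
    simp only [Pi.add_apply, Finset.sum_apply, add_mul, sum_mul, add_sub_right_comm,
      ← sum_sub_distrib, sum_add_distrib, add_div, ← sum_div]
    rw [← symmetrise]
    congr 2
    refine sum_congr rfl fun p _ => ?_
    rw [pairStiffness_comm (τ p.2), pairCoupling_comm (τ p.2)]
    ring

section Hessian

open Matrix

variable {ι : Type*} [Fintype ι] [DecidableEq ι] {z : ι → ℝ}

/-- The matrix `S̃` as a function of the zeros `z` of the Jacobi polynomial; it is minus the Hessian
of `trigJacobiPotential` at the equilibrium. -/
noncomputable def jacobiHessian (a b : ℝ) (z : ι → ℝ) : Matrix ι ι ℝ :=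
  Matrix.of fun i j =>
    if i = j then
      4 * (∑ l ∈ univ.erase j, (1 - z j ^ 2) / (z j - z l) ^ 2) +
        2 * (a + b) * ((1 + z j) / (1 - z j)) + 2 * b * ((1 - z j) / (1 + z j))
    else -4 * √((1 - z i ^ 2) * (1 - z j ^ 2)) / (z i - z j) ^ 2

lemma isSymm_jacobiHessian (a b : ℝ) (z : ι → ℝ) : (jacobiHessian a b z).IsSymm := by
  ext i j
  rcases eq_or_ne i j with rfl | hij
  · rfl
  · simp only [transpose_apply, jacobiHessian, of_apply, if_neg hij, if_neg hij.symm,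
      mul_comm (1 - z j ^ 2), sub_sq_comm (z j)]

/- Writing `1 - z i * z j = (1 - z i ^ 2) + z i * (z i - z j)` leaves a Stieltjes sum, which the
equilibrium condition evaluates. -/
lemma IsStieltjesEquilibrium.jacobiHessian_apply_self (h : IsStieltjesEquilibrium a b z)
    (hz : Function.Injective z) {i : ι} (hi : z i ∈ Set.Ioo (-1) 1) :
    jacobiHessian a b z i i =
      ∑ j ∈ univ.erase i, 4 * (1 - z i * z j) / (z i - z j) ^ 2 +
        2 * ((a + b) / (1 - z i) + b / (1 + z i)) := by
  have one_sub_pos : 0 < 1 - z i := sub_pos.2 hi.2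
  have one_add_pos : 0 < 1 + z i := by linarith [hi.1]
  have split_numerator : ∑ j ∈ univ.erase i, 4 * (1 - z i * z j) / (z i - z j) ^ 2 =
      4 * ∑ j ∈ univ.erase i, (1 - z i ^ 2) / (z i - z j) ^ 2 +
        4 * z i * ∑ j ∈ univ.erase i, 1 / (z i - z j) := by
    rw [mul_sum, mul_sum, ← sum_add_distrib]
    refine sum_congr rfl fun j hj => ?_
    have sub_ne_zero := sub_ne_zero.2 (hz.ne (ne_of_mem_erase hj).symm)
    field_simp
    ring
  have stieltjes_sum : ∑ j ∈ univ.erase i, 1 / (z i - z j) =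
      ((a + b) * (1 + z i) - b * (1 - z i)) / (2 * ((1 - z i) * (1 + z i))) := by
    rw [eq_div_iff (by positivity), ← h i]
    ring
  rw [split_numerator, stieltjes_sum]
  simp only [jacobiHessian, of_apply, if_true]
  field_simp
  ring

end Hessian

lemma IsStieltjesEquilibrium.sum_pairForce_add_siteForce_eq_zero
    (h : IsStieltjesEquilibrium a b fun i => cos (2 * τ i)) (hτ : τ ∈ openTrigAlcove N)
    (i : Fin N) : ∑ j ∈ univ.erase i, pairForce (τ i) (τ j) + siteForce a b (τ i) = 0 := by
  have sin_ne := (sin_pos_of_mem_Ioo (apply_mem_Ioo_of_mem_openTrigAlcove hτ i)).ne'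
  have cos_ne := (cos_pos_of_mem_Ioo (apply_mem_Ioo_neg_of_mem_openTrigAlcove hτ i)).ne'
  have sum_pairForce : ∑ j ∈ univ.erase i, pairForce (τ i) (τ j) =
      -(2 * sin (2 * τ i)) * ∑ j ∈ univ.erase i, 1 / (cos (2 * τ i) - cos (2 * τ j)) := by
    rw [mul_sum]
    refine sum_congr rfl fun j _ => ?_
    rw [pairForce, ← neg_sub (cos _), div_neg, neg_mul, mul_one_div]
  have sin_mul_siteForce : sin (2 * τ i) * siteForce a b (τ i) =
      (a + b) * (1 + cos (2 * τ i)) - b * (1 - cos (2 * τ i)) := by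
    rw [siteForce, tan_eq_sin_div_cos, sin_two_mul, cos_two_mul]
    field_simp
    rw [sin_sq]
    ring
  have sin_two_mul_ne : sin (2 * τ i) ≠ 0 := by
    rw [sin_two_mul]
    positivity
  refine (mul_eq_zero_iff_left sin_two_mul_ne).1 ?_
  rw [mul_add, sin_mul_siteForce, ← h i, sum_pairForce, ← sin_sq]
  ring

lemma siteStiffness_eq (a b u : ℝ) :
    siteStiffness a b u = 2 * ((a + b) / (1 - cos (2 * u)) + b / (1 + cos (2 * u))) := by
  have one_sub_cos : 1 - cos (2 * u) = 2 * sin u ^ 2 := by rw [cos_two_mul, sin_sq]; ring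
  have one_add_cos : 1 + cos (2 * u) = 2 * cos u ^ 2 := by rw [cos_two_mul]; ring
  rw [siteStiffness, one_sub_cos, one_add_cos]
  ring

lemma injective_cos_two_mul (hτ : τ ∈ openTrigAlcove N) :
    Function.Injective fun i => cos (2 * τ i) := fun i j hij =>
  hτ.1.injective <| mul_left_cancel₀ two_ne_zero <| injOn_cos
    (Set.Ioo_subset_Icc_self (two_mul_apply_mem_Ioo_of_mem_openTrigAlcove hτ i))
    (Set.Ioo_subset_Icc_self (two_mul_apply_mem_Ioo_of_mem_openTrigAlcove hτ j)) hij

lemma cos_two_mul_mem_Ioo (hτ : τ ∈ openTrigAlcove N) (i : Fin N) :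
    cos (2 * τ i) ∈ Set.Ioo (-1) 1 := by
  have sin_pos := sin_pos_of_mem_Ioo (two_mul_apply_mem_Ioo_of_mem_openTrigAlcove hτ i)
  rw [Set.mem_Ioo, ← abs_lt, ← sq_lt_one_iff_abs_lt_one]
  nlinarith [sin_sq_add_cos_sq (2 * τ i)]

lemma jacobiHessian_apply_of_ne (hτ : τ ∈ openTrigAlcove N) {i j : Fin N} (hij : i ≠ j) :
    jacobiHessian a b (fun i => cos (2 * τ i)) i j = -pairCoupling (τ i) (τ j) := by
  have sin_pos (i : Fin N) : 0 < sin (2 * τ i) :=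
    sin_pos_of_mem_Ioo (two_mul_apply_mem_Ioo_of_mem_openTrigAlcove hτ i)
  rw [jacobiHessian, Matrix.of_apply, if_neg hij, ← sin_sq, ← sin_sq, ← mul_pow,
    sqrt_sq (mul_pos (sin_pos i) (sin_pos j)).le, pairCoupling, neg_mul, neg_div]

open Matrix in
lemma dotProduct_jacobiHessian_mulVec (h : IsStieltjesEquilibrium a b fun i => cos (2 * τ i))
    (hτ : τ ∈ openTrigAlcove N) (x : Fin N → ℝ) :
    x ⬝ᵥ jacobiHessian a b (fun i => cos (2 * τ i)) *ᵥ x =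
      ∑ i, ((∑ j ∈ univ.erase i, pairStiffness (τ i) (τ j) + siteStiffness a b (τ i)) * x i ^ 2 -
        ∑ j ∈ univ.erase i, pairCoupling (τ i) (τ j) * (x i * x j)) := by
  rw [← sum_sum_mul_apply_mul_eq_dotProduct_mulVec]
  refine sum_congr rfl fun i _ => ?_
  have off_diagonal : ∑ j ∈ univ.erase i,
      x i * jacobiHessian a b (fun i => cos (2 * τ i)) i j * x j =
      -∑ j ∈ univ.erase i, pairCoupling (τ i) (τ j) * (x i * x j) := by
    rw [← sum_neg_distrib]
    refine sum_congr rfl fun j hj => ?_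
    rw [jacobiHessian_apply_of_ne hτ (ne_of_mem_erase hj).symm]
    ring
  rw [← add_sum_erase _ _ (mem_univ i), off_diagonal, siteStiffness_eq,
    h.jacobiHessian_apply_self (injective_cos_two_mul hτ) (cos_two_mul_mem_Ioo hτ i)]
  simp only [pairStiffness]
  ring

open Matrix in
lemma IsStieltjesEquilibrium.hasConcaveExpansionOn_trigJacobiPotential
    (h : IsStieltjesEquilibrium a b fun i => cos (2 * τ i)) (hab : 0 ≤ a + b) (hb : 0 ≤ b)
    (hτ : τ ∈ openTrigAlcove N) :
    HasConcaveExpansionOn (trigJacobiPotential a b) (openTrigAlcove N) τ 0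
      (fun x => (a + 2 * b) / 2 * ∑ i, x i ^ 2)
      (fun x => (x ⬝ᵥ jacobiHessian a b (fun i => cos (2 * τ i)) *ᵥ x) / 2) := by
  convert _root_.hasConcaveExpansionOn_trigJacobiPotential hab hb hτ using 1
  · ext x
    simp only [h.sum_pairForce_add_siteForce_eq_zero hτ, zero_mul, sum_const_zero, Pi.zero_apply]
  · ext x
    rw [dotProduct_jacobiHessian_mulVec h hτ]

lemma posDef_jacobiHessian (h : IsStieltjesEquilibrium a b fun i => cos (2 * τ i))
    (hab : 0 < a + b) (hb : 0 ≤ b) (hτ : τ ∈ openTrigAlcove N) :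
    (jacobiHessian a b fun i => cos (2 * τ i)).PosDef := by
  refine Matrix.PosDef.of_dotProduct_mulVec_pos (isSymm_jacobiHessian _ _ _) fun x hx => ?_
  have bound := (h.hasConcaveExpansionOn_trigJacobiPotential hab.le hb hτ).bound_le_quadratic
    isOpen_openTrigAlcove hτ (fun r x => mul_sum_sq_smul _ r x) x
  have sum_sq_pos : 0 < ∑ i, x i ^ 2 := by
    obtain ⟨i, hi⟩ := Function.ne_iff.1 hx
    exact sum_pos' (fun _ _ => sq_nonneg _) ⟨i, mem_univ i, sq_pos_of_ne_zero hi⟩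
  have bound_pos : 0 < (a + 2 * b) / 2 * ∑ i, x i ^ 2 := by
    have : 0 < a + 2 * b := by linarith
    positivity
  rw [star_trivial]
  linarith

end JacobiEnsemble

section CentralLimitTheorem

open Matrix

variable {N : ℕ} {a b : ℝ}

lemma arccos_div_two_mem_openTrigAlcove {z : Fin N → ℝ} (hz : StrictMono z)
    (hmem : ∀ i, z i ∈ Set.Ioo (-1 : ℝ) 1) : (fun i => arccos (z i) / 2) ∈ openTrigAlcove N := by
  refine ⟨fun i j hij => ?_, fun i => ⟨half_pos (arccos_pos.2 (hmem i).2), ?_⟩⟩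
  · have arccos_lt := strictAntiOn_arccos (Set.Ioo_subset_Icc_self (hmem i))
      (Set.Ioo_subset_Icc_self (hmem j)) (hz hij)
    linarith
  · have arccos_lt_pi : arccos (z i) < π := (arccos_le_pi _).lt_of_ne fun h =>
      (hmem i).1.not_ge (arccos_eq_pi.1 h)
    linarith

lemma two_pi_rpow_neg_div_two_mul_sqrt (N : ℕ) (d : ℝ) :
    (2 * π) ^ (-(N : ℝ) / 2) * √d = (√(2 * π) ^ N / √d)⁻¹ := by
  have sqrt_pow : √(2 * π) ^ N = (2 * π) ^ ((N : ℝ) / 2) := by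
    rw [sqrt_eq_rpow, ← rpow_mul_natCast (by positivity), one_div_mul_eq_div]
  rw [inv_div, sqrt_pow, neg_div, rpow_neg (by positivity), inv_mul_eq_div]

lemma tendsto_trigJacobi_average {τ : Fin N → ℝ} (hab : 0 < a + b) (hb : 0 < b)
    (hτ : τ ∈ openTrigAlcove N) (h : IsStieltjesEquilibrium a b fun i => cos (2 * τ i))
    (f : BoundedContinuousFunction (Fin N → ℝ) ℝ) :
    Tendsto (fun κ => (∫ t in trigAlcove N, f (√κ • (t - τ)) * trigJacobiWeight a b κ t) /
        ∫ t in trigAlcove N, trigJacobiWeight a b κ t) atTop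
      (𝓝 ((∫ x, f x * exp (-(x ⬝ᵥ jacobiHessian a b (fun i => cos (2 * τ i)) *ᵥ x) / 2)) /
        ∫ x : Fin N → ℝ, exp (-(x ⬝ᵥ jacobiHessian a b (fun i => cos (2 * τ i)) *ᵥ x) / 2))) := by
  have posDef := posDef_jacobiHessian h hab hb.le hτ
  have gaussian_integral_ne_zero : ∫ x : Fin N → ℝ,
      exp (-((x ⬝ᵥ jacobiHessian a b (fun i => cos (2 * τ i)) *ᵥ x) / 2)) ≠ 0 := by
    simp only [← neg_div]
    rw [integral_exp_neg_dotProduct_mulVec_div_two posDef]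
    have := posDef.det_pos
    positivity
  have laplace := tendsto_laplace_average volume (measurable_trigJacobiPotential a b)
    (h.hasConcaveExpansionOn_trigJacobiPotential hab.le hb.le hτ) isOpen_openTrigAlcove hτ
    (fun r x => mul_sum_sq_smul _ r x) (integrable_exp_neg_mul_sum_sq (by linarith))
    gaussian_integral_ne_zero f
  simp only [← neg_div] at laplace
  refine laplace.congr' ?_
  filter_upwards [eventually_gt_atTop 0] with κ hκ
  have denominator := setIntegral_trigAlcove_mul_trigJacobiWeight (N := N) (a := a) hb hκ fun _ => 1
  simp only [one_mul] at denominator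
  rw [setIntegral_trigAlcove_mul_trigJacobiWeight hb hκ, denominator]

theorem trig_jacobi_ensemble_clt_general (hab : 0 < a + b) (hb : 0 < b) {P : Polynomial ℝ}
    (hPdeg : P.natDegree = N)
    (hPorth : ∀ Q : Polynomial ℝ, Q.natDegree < N → jacobiIntegral (a + b - 1) (b - 1) (P * Q) = 0)
    {z : Fin N → ℝ} (hzmono : StrictMono z) (hzroot : ∀ i, P.eval (z i) = 0)
    (hzmem : ∀ i, z i ∈ Set.Ioo (-1 : ℝ) 1) :
    (jacobiHessian a b z).PosDef ∧
      ∀ f : BoundedContinuousFunction (Fin N → ℝ) ℝ,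
        Tendsto (fun κ : ℝ =>
            (∫ t in trigAlcove N,
              f (√κ • (t - fun i => arccos (z i) / 2)) * trigJacobiWeight a b κ t) /
              ∫ t in trigAlcove N, trigJacobiWeight a b κ t)
          atTop
          (𝓝 (∫ x : Fin N → ℝ, f x * ((2 * π) ^ (-(N : ℝ) / 2) * √(jacobiHessian a b z).det *
            exp (-(∑ i, ∑ j, x i * jacobiHessian a b z i j * x j) / 2)))) := by
  have equilibrium : IsStieltjesEquilibrium a b z := isStieltjesEquilibrium_of_jacobi_roots hab hb
    (by rw [hPdeg, Fintype.card_fin]) (by rwa [hPdeg]) hzmono.injective hzroot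
  have critical_point := arccos_div_two_mem_openTrigAlcove hzmono hzmem
  have cos_critical_point : z = fun i => cos (2 * (arccos (z i) / 2)) := by
    ext i
    rw [mul_div_cancel₀ _ two_ne_zero, cos_arccos (hzmem i).1.le (hzmem i).2.le]
  rw [cos_critical_point] at equilibrium
  have posDef := posDef_jacobiHessian equilibrium hab hb.le critical_point
  have averages := tendsto_trigJacobi_average hab hb critical_point equilibrium
  rw [← cos_critical_point] at posDef averages
  refine ⟨posDef, fun f => ?_⟩
  convert averages f using 2
  rw [integral_exp_neg_dotProduct_mulVec_div_two posDef, Fintype.card_fin,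
    div_eq_inv_mul (∫ _, _), ← two_pi_rpow_neg_div_two_mul_sqrt, ← integral_const_mul]
  simp only [sum_sum_mul_apply_mul_eq_dotProduct_mulVec, mul_left_comm]

end CentralLimitTheorem

theorem trig_jacobi_ensemble_clt
    (N : ℕ) (hN : 1 ≤ N) (a b : ℝ) (ha : 0 ≤ a) (hb : 0 < b)
    (α β : ℝ) (hα : α = a + b - 1) (hβ : β = b - 1)
    (P : Polynomial ℝ) (hPdeg : P.natDegree = N)
    (hPorth : ∀ Q : Polynomial ℝ, Q.natDegree < N →
      ∫ x in Set.Ioo (-1 : ℝ) 1,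
        P.eval x * Q.eval x * (1 - x) ^ α * (1 + x) ^ β = 0)
    (hPone : P.eval 1 = (∏ j ∈ Finset.range N, (α + 1 + j)) / (N.factorial : ℝ))
    (z : Fin N → ℝ) (hzmono : StrictMono z)
    (hzroot : ∀ i, P.eval (z i) = 0)
    (hzmem : ∀ i, z i ∈ Set.Ioo (-1 : ℝ) 1)
    (At : Set (Fin N → ℝ))
    (hAt : At = {t | Antitone t ∧ ∀ i, t i ∈ Set.Icc (0 : ℝ) (π / 2)})
    (w : ℝ → (Fin N → ℝ) → ℝ)
    (hw : w = fun κ t =>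
      (∏ p ∈ Finset.univ.filter (fun p : Fin N × Fin N => p.1 < p.2),
        (Real.cos (2 * t p.2) - Real.cos (2 * t p.1)) ^ κ) *
      ∏ i, (Real.sin (t i) ^ (κ * a) * Real.sin (2 * t i) ^ (κ * b)))
    (S : Matrix (Fin N) (Fin N) ℝ)
    (hS : S = Matrix.of fun i j =>
      if i = j then
        4 * (∑ l ∈ Finset.univ.erase j, (1 - z j ^ 2) / (z j - z l) ^ 2) +
          2 * (a + b) * ((1 + z j) / (1 - z j)) + 2 * b * ((1 - z j) / (1 + z j))
      else -4 * Real.sqrt ((1 - z i ^ 2) * (1 - z j ^ 2)) / (z i - z j) ^ 2)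
    : S.PosDef ∧
      ∀ f : BoundedContinuousFunction (Fin N → ℝ) ℝ,
        Tendsto (fun κ : ℝ =>
            (∫ t in At, f (Real.sqrt κ • (t - fun i => Real.arccos (z i) / 2)) * w κ t) /
              (∫ t in At, w κ t))
          atTop
          (𝓝 (∫ x : Fin N → ℝ, f x *
            ((2 * π) ^ (-(N : ℝ) / 2) * Real.sqrt S.det *
              Real.exp (-(∑ i, ∑ j, x i * S i j * x j) / 2)))) := by
  subst hα hβ hAt hw hS
  exact trig_jacobi_ensemble_clt_general (by linarith) hb hPdeg
    (fun Q hQ => by simpa [jacobiIntegral] using hPorth Q hQ) hzmono hzroot hzmem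
end

section
/- Let N ≥ 1, α, β > −1, and let z_1 < ... < z_N be the ordered zeros of the Jacobi polynomial P_N^{(α,β)}. Let S̃ be the N×N matrix with entries s̃_{j,j} = 4Σ_{l≠j}(1−z_j²)/(z_j−z_l)² + 2(α+1)(1+z_j)/(1−z_j) + 2(β+1)(1−z_j)/(1+z_j) and s̃_{i,j} = −4√((1−z_i²)(1−z_j²))/(z_i−z_j)² for i ≠ j. Then there exist real polynomials q_0, q_1, ..., q_{N−1}, with q_{k−1} of degree k−1, which are orthonormal with respect to the discrete measure μ_{N,α,β} = Σ_{i=1}^N (1−z_i²)δ_{z_i} (i.e. Σ_{i=1}^N q_l(z_i)q_m(z_i)(1−z_i²) = δ_{l,m}), such that for every k = 1, ..., N the vector v_k = (q_{k−1}(z_1)√(1−z_1²), ..., q_{k−1}(z_N)√(1−z_N²))^T satisfies S̃ v_k = 2k(2N+α+β+1−k) v_k. -/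
open MeasureTheory Filter Real Finset Topology

/-!
Let `σ = 1 - X ^ 2` and `τ = (β - α) - (α + β + 2) X`. Integration by parts shows that the Jacobi
weight functional `Λ` satisfies the Pearson equation `Λ (σ R' + τ R) = 0`. Take `R = Q ^ 2`, where
`Q = P / (X - z i)`. Modulo `P`, the factor `2 σ Q' + τ Q` is its value at `z i`, so orthogonality
of `P` gives Stieltjes' relations `2 σ(z i) ∑_{l ≠ i} 1 / (z i - z l) + τ(z i) = 0`.

By these relations, the matrix sends the vector `(f(z i) √σ(z i))` attached to a polynomial `f` to
the vector attached to a polynomial `T f`. The operator `T` does not raise degrees and multiplies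
the coefficient of `X ^ k` of a polynomial of degree at most `k` by `2 (k + 1) (2 N + α + β - k)`.
The matrix being symmetric, `T` is self-adjoint for the discrete inner product, and a self-adjoint
operator which is triangular in the degree is diagonalised by the orthonormal polynomials.
-/

namespace TrigJacobi

open Polynomial

section DividedDifferences

theorem coeff_divByMonic_X_sub_C_of_natDegree_le {R : Type*} [Ring R] {p : R[X]} {n : ℕ}
    (hp : p.natDegree ≤ n + 1) (a : R) : (p /ₘ (X - C a)).coeff n = p.coeff (n + 1) := by
  nontriviality R
  have hdeg : (p /ₘ (X - C a)).natDegree < n + 1 := by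
    rw [natDegree_divByMonic p (monic_X_sub_C a), natDegree_X_sub_C]
    lia
  rw [coeff_divByMonic_X_sub_C_rec, coeff_eq_zero_of_natDegree_lt hdeg, mul_zero, add_zero]

theorem eval_sub_eval_eq_mul_eval_divByMonic {R : Type*} [CommRing R] (p : R[X]) (x a : R) :
    p.eval x - p.eval a = (x - a) * (p /ₘ (X - C a)).eval x := by
  simpa [modByMonic_X_sub_C_eq_C_eval] using
    (congrArg (eval x) (X_sub_C_mul_divByMonic_eq_sub_modByMonic p a)).symm

theorem two_mul_eval_derivative_divByMonic_self {R : Type*} [CommRing R] (p : R[X]) (a : R) :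
    2 * (derivative (p /ₘ (X - C a))).eval a = (derivative (derivative p)).eval a := by
  rw [← divByMonic_add_X_sub_C_mul_derivative_divByMonic_eq_derivative p a]
  simp [two_mul]

variable {K : Type*} [Field K]

theorem eval_sub_eval_div_sq (p : K[X]) {x a : K} (hxa : x ≠ a) :
    (p.eval x - p.eval a) / (x - a) ^ 2 =
      (derivative p).eval x * (1 / (x - a)) - (derivative (p /ₘ (X - C a))).eval x := by
  have hne : x - a ≠ 0 := sub_ne_zero.2 hxa
  rw [eval_sub_eval_eq_mul_eval_divByMonic,
    ← divByMonic_add_X_sub_C_mul_derivative_divByMonic_eq_derivative p a]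
  simp only [eval_add, eval_mul, eval_sub, eval_X, eval_C]
  field_simp
  ring

theorem two_mul_sum_erase_eval_sub_eval_div_sq {ι : Type*} [DecidableEq ι] (s : Finset ι)
    {z : ι → K} (hz : Function.Injective z) (p : K[X]) {i : ι} (hi : i ∈ s) :
    2 * ∑ l ∈ s.erase i, (p.eval (z i) - p.eval (z l)) / (z i - z l) ^ 2 =
      2 * (derivative p).eval (z i) * ∑ l ∈ s.erase i, 1 / (z i - z l)
        + (derivative (derivative p)).eval (z i)
        - 2 * ∑ l ∈ s, (derivative (p /ₘ (X - C (z l)))).eval (z i) := by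
  have hsplit : ∀ l ∈ s.erase i, (p.eval (z i) - p.eval (z l)) / (z i - z l) ^ 2 =
      (derivative p).eval (z i) * (1 / (z i - z l)) -
        (derivative (p /ₘ (X - C (z l)))).eval (z i) := fun l hl =>
    eval_sub_eval_div_sq p (hz.ne (ne_of_mem_erase hl).symm)
  rw [sum_congr rfl hsplit, sum_sub_distrib, ← mul_sum, ← add_sum_erase s _ hi]
  linear_combination two_mul_eval_derivative_divByMonic_self p (z i)

end DividedDifferences

section Stieltjes

variable {K : Type*} [Field K]

theorem eval_derivative_nodal {ι : Type*} (s : Finset ι) (z : ι → K) {x : K}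
    (hx : ∀ l ∈ s, x ≠ z l) :
    (derivative (Lagrange.nodal s z)).eval x =
      (Lagrange.nodal s z).eval x * ∑ l ∈ s, 1 / (x - z l) := by
  classical
  rw [Lagrange.derivative_nodal, eval_finsetSum, mul_sum]
  refine sum_congr rfl fun l hl => ?_
  have hne : x - z l ≠ 0 := sub_ne_zero.2 (hx l hl)
  rw [Lagrange.nodal_eq_mul_nodal_erase hl]
  simp only [eval_mul, eval_sub, eval_X, eval_C]
  field_simp

theorem eq_C_leadingCoeff_mul_nodal {ι : Type*} [Fintype ι] {P : K[X]} {z : ι → K}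
    (hP : P.degree = Fintype.card ι) (hz : Function.Injective z) (hroot : ∀ i, P.eval (z i) = 0) :
    P = C P.leadingCoeff * Lagrange.nodal univ z := by
  have hlead : P.leadingCoeff ≠ 0 := leadingCoeff_ne_zero.2 (by rintro rfl; simp at hP)
  refine eq_of_degree_le_of_eval_index_eq univ hz.injOn hP.le ?_ ?_ fun i hi => ?_
  · rw [degree_C_mul hlead, Lagrange.degree_nodal, hP, card_univ]
  · simp [Lagrange.nodal_monic.leadingCoeff]
  · simp [hroot, Lagrange.eval_nodal_at_node hi]

variable (Λ : K[X] →ₗ[K] K) {σ τ : K[X]}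

theorem apply_mul_eq_eval_mul_apply {Q U : K[X]} {a : K}
    (horth : Λ ((X - C a) * Q * (U /ₘ (X - C a))) = 0) : Λ (U * Q) = U.eval a * Λ Q := by
  have hU : U * Q = U.eval a • Q + (X - C a) * Q * (U /ₘ (X - C a)) := by
    rw [smul_eq_C_mul, ← modByMonic_X_sub_C_eq_C_eval]
    linear_combination (-Q) * modByMonic_add_div U (X - C a)
  rw [hU, map_add, map_smul, horth, add_zero, smul_eq_mul]

theorem natDegree_pearson_le (hσ : σ.natDegree ≤ 2) (hτ : τ.natDegree ≤ 1) (Q : K[X]) :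
    (2 * σ * derivative Q + τ * Q).natDegree ≤ Q.natDegree + 1 := by
  refine natDegree_add_le_of_degree_le ?_ (natDegree_mul_le.trans (by lia))
  rcases Nat.eq_zero_or_pos Q.natDegree with hQ | hQ
  · simp [derivative_of_natDegree_zero hQ]
  · have hσ' : (2 * σ).natDegree ≤ 2 := by
      simpa using natDegree_mul_le_of_le (natDegree_ofNat (R := K) 2).le hσ
    have hQ' := natDegree_derivative_le Q
    exact natDegree_mul_le.trans (by lia)

theorem eval_pearson_eq_zero (hΛ : ∀ R ≠ 0, Λ (R * R) ≠ 0) (hσ : σ.natDegree ≤ 2)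
    (hτ : τ.natDegree ≤ 1) (hpearson : ∀ R, Λ (σ * derivative R + τ * R) = 0) {Q : K[X]}
    (hQ : Q ≠ 0) {a : K}
    (horth : ∀ U : K[X], U.natDegree ≤ Q.natDegree → Λ ((X - C a) * Q * U) = 0) :
    2 * σ.eval a * (derivative Q).eval a + τ.eval a * Q.eval a = 0 := by
  have hquad : ∀ U : K[X], U.natDegree ≤ Q.natDegree + 1 → Λ (U * Q) = U.eval a * Λ Q := by
    intro U hU
    refine apply_mul_eq_eval_mul_apply Λ (horth _ ?_)
    rw [natDegree_divByMonic U (monic_X_sub_C a), natDegree_X_sub_C]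
    lia
  have hΛQ : Λ Q ≠ 0 := fun h => hΛ Q hQ (by rw [hquad Q (by lia), h, mul_zero])
  have hprod : Λ ((2 * σ * derivative Q + τ * Q) * Q) = 0 := by
    rw [← hpearson (Q * Q), derivative_mul]
    congr 1
    ring
  rw [hquad _ (natDegree_pearson_le hσ hτ Q)] at hprod
  simpa using (mul_eq_zero.1 hprod).resolve_right hΛQ

theorem stieltjes_relation {ι : Type*} [Fintype ι] [DecidableEq ι]
    (hΛ : ∀ R ≠ 0, Λ (R * R) ≠ 0) (hσ : σ.natDegree ≤ 2) (hτ : τ.natDegree ≤ 1)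
    (hpearson : ∀ R, Λ (σ * derivative R + τ * R) = 0) {P : K[X]}
    (hP : P.natDegree = Fintype.card ι)
    (horth : ∀ U : K[X], U.natDegree < Fintype.card ι → Λ (P * U) = 0) {z : ι → K}
    (hz : Function.Injective z) (hroot : ∀ i, P.eval (z i) = 0) (i : ι) :
    2 * σ.eval (z i) * ∑ l ∈ univ.erase i, 1 / (z i - z l) + τ.eval (z i) = 0 := by
  have hcard : 0 < Fintype.card ι := Fintype.card_pos_iff.2 ⟨i⟩
  have hP0 : P ≠ 0 := ne_zero_of_natDegree_gt (hP ▸ hcard)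
  have hlead : P.leadingCoeff ≠ 0 := leadingCoeff_ne_zero.2 hP0
  set Q := C P.leadingCoeff * Lagrange.nodal (univ.erase i) z with hQ
  have hQdeg : Q.natDegree + 1 = Fintype.card ι := by
    rw [hQ, natDegree_C_mul hlead, Lagrange.natDegree_nodal, card_erase_add_one (mem_univ i),
      card_univ]
  have hPQ : P = (X - C (z i)) * Q := by
    rw [eq_C_leadingCoeff_mul_nodal (degree_eq_iff_natDegree_eq hP0 |>.2 hP) hz hroot,
      Lagrange.nodal_eq_mul_nodal_erase (mem_univ i), hQ]
    ring
  have hne : ∀ l ∈ univ.erase i, z i ≠ z l := fun l hl => hz.ne (ne_of_mem_erase hl).symm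
  have hQi : Q.eval (z i) ≠ 0 := by
    rw [hQ, eval_mul, eval_C]
    exact mul_ne_zero hlead (Lagrange.eval_nodal_not_at_node hne)
  have hQ' : (derivative Q).eval (z i) = Q.eval (z i) * ∑ l ∈ univ.erase i, 1 / (z i - z l) := by
    simp only [hQ, derivative_C_mul, eval_mul, eval_C, eval_derivative_nodal _ _ hne, mul_assoc]
  have hQ0 : Q ≠ 0 := by rintro h; simp [h] at hQi
  have hzero := eval_pearson_eq_zero Λ hΛ hσ hτ hpearson hQ0 (a := z i)
    fun U hU => hPQ ▸ horth U (by lia)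
  rw [hQ'] at hzero
  refine mul_left_cancel₀ hQi ?_
  linear_combination hzero

end Stieltjes

section OrthogonalPolynomials

theorem exists_mem_sub_orthogonal {K V : Type*} [Field K] [AddCommGroup V] [Module K V]
    (B : LinearMap.BilinForm K V) (W : Submodule K V) [FiniteDimensional K W]
    (hW : (B.restrict W).Nondegenerate) (x : V) : ∃ p ∈ W, ∀ y ∈ W, B (x - p) y = 0 := by
  let p := ((B.restrict W).toDual hW).symm ((B x).domRestrict W)
  have hp : ∀ y : W, B p y = B x y := fun y =>
    LinearMap.BilinForm.apply_toDual_symm_apply (hB := hW) ((B x).domRestrict W) y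
  exact ⟨p, p.2, fun y hy => by rw [map_sub, LinearMap.sub_apply, hp ⟨y, hy⟩, sub_self]⟩

variable {N : ℕ} {B : LinearMap.BilinForm ℝ ℝ[X]}

theorem nondegenerate_restrict_degreeLT (hB : B.IsSymm)
    (hpos : ∀ f ∈ degreeLT ℝ N, f ≠ 0 → 0 < B f f) : (B.restrict (degreeLT ℝ N)).Nondegenerate := by
  refine (hB.isRefl.domRestrict _).nondegenerate_iff_separatingLeft.2 fun f hf => ?_
  by_contra hf0
  exact (hpos f f.2 (by simpa using hf0)).ne' (hf f)

theorem exists_orthonormal_polynomial (hB : B.IsSymm)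
    (hpos : ∀ f ∈ degreeLT ℝ N, f ≠ 0 → 0 < B f f) {k : ℕ} (hk : k < N) :
    ∃ q : ℝ[X], q.natDegree = k ∧ (∀ p ∈ degreeLT ℝ k, B q p = 0) ∧ B q q = 1 := by
  have : FiniteDimensional ℝ (degreeLT ℝ k) := Module.Finite.equiv (degreeLTEquiv ℝ k).symm
  obtain ⟨p, hp, horth⟩ := exists_mem_sub_orthogonal B (degreeLT ℝ k)
    (nondegenerate_restrict_degreeLT hB fun f hf => hpos f (degreeLT_mono hk.le hf)) (X ^ k)
  set q := X ^ k - p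
  have hdeg : q.degree = k := by
    rw [degree_sub_eq_left_of_degree_lt (by simpa using mem_degreeLT.1 hp), degree_X_pow]
  have hq : 0 < B q q := by
    refine hpos q (mem_degreeLT.2 (by rw [hdeg]; exact_mod_cast hk)) ?_
    rintro h
    simp [h] at hdeg
  refine ⟨(√(B q q))⁻¹ • q, ?_, fun y hy => by simp [horth y hy], ?_⟩
  · rw [natDegree_smul _ (inv_ne_zero (sqrt_pos.2 hq).ne'), natDegree_eq_of_degree_eq_some hdeg]
  · rw [map_smul, map_smul, LinearMap.smul_apply, smul_eq_mul, smul_eq_mul, ← mul_assoc,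
      ← mul_inv, mul_self_sqrt hq.le, inv_mul_cancel₀ hq.ne']

theorem mem_degreeLT_of_natDegree_lt {R : Type*} [Semiring R] {f : R[X]} {k : ℕ}
    (hf : f.natDegree < k) : f ∈ degreeLT R k :=
  mem_degreeLT.2 (degree_le_natDegree.trans_lt (by exact_mod_cast hf))

theorem sub_smul_mem_degreeLT {R : Type*} [CommRing R] {T : R[X] → R[X]} {eig : ℕ → R}
    (hT : ∀ f k, f.natDegree ≤ k → (T f).coeff k = eig k * f.coeff k) {f : R[X]} {k : ℕ}
    (hf : f.natDegree ≤ k) : T f - eig k • f ∈ degreeLT R k := by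
  rw [mem_degreeLT, degree_lt_iff_coeff_zero]
  intro m hm
  rw [coeff_sub, coeff_smul, smul_eq_mul, hT f m (hf.trans hm)]
  rcases hm.eq_or_lt with rfl | hlt
  · exact sub_self _
  · simp [coeff_eq_zero_of_natDegree_lt (hf.trans_lt hlt)]

theorem apply_mem_degreeLT {R : Type*} [CommRing R] {T : R[X] → R[X]} {eig : ℕ → R}
    (hT : ∀ f k, f.natDegree ≤ k → (T f).coeff k = eig k * f.coeff k) {f : R[X]} {k : ℕ}
    (hf : f ∈ degreeLT R k) : T f ∈ degreeLT R k := by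
  rw [mem_degreeLT, degree_lt_iff_coeff_zero] at hf ⊢
  intro m hm
  have hdeg : f.natDegree ≤ m := natDegree_le_iff_coeff_eq_zero.2 fun n hn => hf n (hm.trans hn.le)
  rw [hT f m hdeg, hf m hm, mul_zero]

theorem apply_eq_smul_of_orthogonal (hpos : ∀ f ∈ degreeLT ℝ N, f ≠ 0 → 0 < B f f)
    {T : ℝ[X] → ℝ[X]} (hadj : B.IsAdjointPair B T T) {eig : ℕ → ℝ}
    (hT : ∀ f k, f.natDegree ≤ k → (T f).coeff k = eig k * f.coeff k) {k : ℕ} (hk : k < N)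
    {q : ℝ[X]} (hq : q.natDegree ≤ k) (horth : ∀ p ∈ degreeLT ℝ k, B q p = 0) :
    T q = eig k • q := by
  set r := T q - eig k • q with hr
  have hrk : r ∈ degreeLT ℝ k := sub_smul_mem_degreeLT hT hq
  have hexp : ∀ y, B r y = B (T q) y - eig k * B q y := fun y => by simp [hr]
  have hBr : B r r = 0 := calc
    B r r = B (T q) r - eig k * B q r := hexp r
    _ = B q (T r) - eig k * B q r := by rw [hadj q r]
    _ = 0 := by rw [horth _ (apply_mem_degreeLT hT hrk), horth r hrk, mul_zero, sub_zero]
  have hr0 : r = 0 := by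
    by_contra hne
    exact (hpos r (degreeLT_mono hk.le hrk) hne).ne' hBr
  exact sub_eq_zero.1 hr0

theorem exists_orthonormal_eigenpolynomials (hB : B.IsSymm)
    (hpos : ∀ f ∈ degreeLT ℝ N, f ≠ 0 → 0 < B f f) {T : ℝ[X] → ℝ[X]}
    (hadj : B.IsAdjointPair B T T) {eig : ℕ → ℝ}
    (hT : ∀ f k, f.natDegree ≤ k → (T f).coeff k = eig k * f.coeff k) :
    ∃ q : Fin N → ℝ[X], (∀ k, (q k).natDegree = k) ∧
      (∀ k l, B (q k) (q l) = if k = l then 1 else 0) ∧ ∀ k, T (q k) = eig k • q k := by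
  choose q hdeg horth hnorm using fun k : Fin N => exists_orthonormal_polynomial hB hpos k.2
  have hlt : ∀ k l : Fin N, l < k → B (q k) (q l) = 0 := fun k l h =>
    horth k _ (mem_degreeLT_of_natDegree_lt (by rw [hdeg]; exact h))
  refine ⟨q, hdeg, fun k l => ?_, fun k =>
    apply_eq_smul_of_orthogonal hpos hadj hT k.2 (hdeg k).le (horth k)⟩
  rcases lt_trichotomy k l with h | rfl | h
  · rw [if_neg h.ne, hB.eq, hlt l k h]
  · rw [if_pos rfl, hnorm]
  · rw [if_neg h.ne', hlt k l h]

end OrthogonalPolynomials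

section JacobiWeight

variable {α β : ℝ}

theorem intervalIntegrable_one_sub_rpow_mul_one_add_rpow (hα : -1 < α) (hβ : -1 < β) :
    IntervalIntegrable (fun x : ℝ => (1 - x) ^ α * (1 + x) ^ β) volume (-1) 1 := by
  have hleft : IntervalIntegrable (fun x : ℝ => (1 + x) ^ β) volume (-1) 0 := by
    simpa using (intervalIntegral.intervalIntegrable_rpow' (a := 0) (b := 1) hβ).comp_add_left 1
  have hright : IntervalIntegrable (fun x : ℝ => (1 - x) ^ α) volume 0 1 := by
    simpa using (intervalIntegral.intervalIntegrable_rpow' (a := 1) (b := 0) hα).comp_sub_left 1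
  have hcontLeft : ContinuousOn (fun x : ℝ => (1 - x) ^ α) (Set.uIcc (-1) 0) := by
    refine ContinuousOn.rpow_const (by fun_prop) fun x hx => Or.inl ?_
    rw [Set.uIcc_of_le (by norm_num)] at hx
    linarith [hx.2]
  have hcontRight : ContinuousOn (fun x : ℝ => (1 + x) ^ β) (Set.uIcc 0 1) := by
    refine ContinuousOn.rpow_const (by fun_prop) fun x hx => Or.inl ?_
    rw [Set.uIcc_of_le (by norm_num)] at hx
    linarith [hx.1]
  exact (hleft.continuousOn_mul hcontLeft).trans (hright.mul_continuousOn hcontRight)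

theorem intervalIntegrable_eval_mul_jacobiWeight (hα : -1 < α) (hβ : -1 < β) (R : ℝ[X]) :
    IntervalIntegrable (fun x : ℝ => R.eval x * (1 - x) ^ α * (1 + x) ^ β) volume (-1) 1 := by
  simpa only [mul_assoc] using
    (intervalIntegrable_one_sub_rpow_mul_one_add_rpow hα hβ).continuousOn_mul
      R.continuous.continuousOn

theorem integrableOn_eval_mul_jacobiWeight (hα : -1 < α) (hβ : -1 < β) (R : ℝ[X]) :
    IntegrableOn (fun x : ℝ => R.eval x * (1 - x) ^ α * (1 + x) ^ β) (Set.Ioo (-1) 1) :=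
  (intervalIntegrable_iff_integrableOn_Ioo_of_le (by norm_num)).1
    (intervalIntegrable_eval_mul_jacobiWeight hα hβ R)

/-- Integration of polynomials against the Jacobi weight `(1 - x) ^ α (1 + x) ^ β` on `(-1, 1)`, as
a linear functional. -/
noncomputable def jacobiFunctional (hα : -1 < α) (hβ : -1 < β) : ℝ[X] →ₗ[ℝ] ℝ where
  toFun R := ∫ x in Set.Ioo (-1 : ℝ) 1, R.eval x * (1 - x) ^ α * (1 + x) ^ β
  map_add' R U := by
    simp only [eval_add, add_mul]
    exact integral_add (integrableOn_eval_mul_jacobiWeight hα hβ R)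
      (integrableOn_eval_mul_jacobiWeight hα hβ U)
  map_smul' c R := by
    simp only [eval_smul, smul_eq_mul, mul_assoc, integral_const_mul, RingHom.id_apply]

theorem jacobiFunctional_apply (hα : -1 < α) (hβ : -1 < β) (R : ℝ[X]) :
    jacobiFunctional hα hβ R =
      ∫ x in Set.Ioo (-1 : ℝ) 1, R.eval x * (1 - x) ^ α * (1 + x) ^ β :=
  rfl

theorem jacobiFunctional_mul_self_pos (hα : -1 < α) (hβ : -1 < β) {R : ℝ[X]} (hR : R ≠ 0) :
    0 < jacobiFunctional hα hβ (R * R) := by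
  have hweight : ∀ x ∈ Set.Ioo (-1 : ℝ) 1, 0 < (1 - x) ^ α ∧ 0 < (1 + x) ^ β := fun x hx =>
    ⟨rpow_pos_of_pos (by linarith [hx.2]) α, rpow_pos_of_pos (by linarith [hx.1]) β⟩
  rw [jacobiFunctional_apply, setIntegral_pos_iff_support_of_nonneg_ae _
    (integrableOn_eval_mul_jacobiWeight hα hβ _)]
  · have hsub : Set.Ioo (-1 : ℝ) 1 \ R.rootSet ℝ ⊆
        Function.support (fun x => (R * R).eval x * (1 - x) ^ α * (1 + x) ^ β) ∩
          Set.Ioo (-1) 1 := by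
      rintro x ⟨hx, hroot⟩
      have heval : R.eval x ≠ 0 := fun h => hroot (mem_rootSet.2 ⟨hR, by simpa using h⟩)
      simp [heval, (hweight x hx).1.ne', (hweight x hx).2.ne', hx.1, hx.2]
    refine lt_of_lt_of_le ?_ (measure_mono hsub)
    rw [measure_sdiff_null ((rootSet_finite R ℝ).measure_zero _), Real.volume_Ioo]
    norm_num
  · filter_upwards [ae_restrict_mem measurableSet_Ioo] with x hx
    rw [eval_mul]
    exact mul_nonneg (mul_nonneg (mul_self_nonneg _) (hweight x hx).1.le) (hweight x hx).2.le

variable (α β) in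
/-- The polynomial `τ` of the Pearson equation `((1 - x ^ 2) w)' = τ w` satisfied by the Jacobi
weight `w = (1 - x) ^ α (1 + x) ^ β`. -/
noncomputable def jacobiTau : ℝ[X] := C (β - α) - C (α + β + 2) * X

theorem hasDerivAt_eval_mul_one_sub_rpow_mul_one_add_rpow (R : ℝ[X]) {x : ℝ}
    (hx : x ∈ Set.Ioo (-1 : ℝ) 1) :
    HasDerivAt (fun x => R.eval x * (1 - x) ^ (α + 1) * (1 + x) ^ (β + 1))
      (((1 - X ^ 2) * derivative R + jacobiTau α β * R).eval x * (1 - x) ^ α * (1 + x) ^ β) x := by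
  have hsub : 1 - x ≠ 0 := by linarith [hx.2]
  have hadd : 1 + x ≠ 0 := by linarith [hx.1]
  have hderivSub : HasDerivAt (fun x : ℝ => (1 - x) ^ (α + 1))
      (-1 * (α + 1) * (1 - x) ^ (α + 1 - 1)) x :=
    ((hasDerivAt_id x).const_sub 1).rpow_const (Or.inl hsub)
  have hderivAdd : HasDerivAt (fun x : ℝ => (1 + x) ^ (β + 1))
      (1 * (β + 1) * (1 + x) ^ (β + 1 - 1)) x :=
    ((hasDerivAt_id x).const_add 1).rpow_const (Or.inl hadd)
  refine (((R.hasDerivAt x).mul hderivSub).mul hderivAdd).congr_deriv ?_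
  simp only [Pi.mul_apply, add_sub_cancel_right, rpow_add_one hsub, rpow_add_one hadd, jacobiTau,
    eval_add, eval_sub, eval_mul, eval_one, eval_pow, eval_X, eval_C]
  ring

theorem jacobiFunctional_pearson (hα : -1 < α) (hβ : -1 < β) (R : ℝ[X]) :
    jacobiFunctional hα hβ ((1 - X ^ 2) * derivative R + jacobiTau α β * R) = 0 := by
  have hα' : α + 1 ≠ 0 := by linarith
  have hβ' : β + 1 ≠ 0 := by linarith
  have hcont : Continuous fun x : ℝ => R.eval x * (1 - x) ^ (α + 1) * (1 + x) ^ (β + 1) :=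
    (R.continuous.mul
      (Continuous.rpow_const (by fun_prop) fun _ => Or.inr (by linarith))).mul
      (Continuous.rpow_const (by fun_prop) fun _ => Or.inr (by linarith))
  rw [jacobiFunctional_apply, ← integral_Ioc_eq_integral_Ioo,
    ← intervalIntegral.integral_of_le (by norm_num),
    intervalIntegral.integral_eq_sub_of_hasDerivAt_of_le (by norm_num) hcont.continuousOn
      (fun x hx => hasDerivAt_eval_mul_one_sub_rpow_mul_one_add_rpow R hx)
      (intervalIntegrable_eval_mul_jacobiWeight hα hβ _)]
  simp [hα', hβ']

end JacobiWeight

section StieltjesEquilibrium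

variable {ι : Type*} [Fintype ι] [DecidableEq ι] {α β : ℝ} {z : ι → ℝ}

variable (α β z) in
/-- Stieltjes' relations: the points `z i` are in equilibrium for the logarithmic interaction
between them together with charges proportional to `α + 1` at `1` and to `β + 1` at `-1`. The force
on `z i` is multiplied by `2 (1 - z i ^ 2)` to clear the denominators. -/
def IsStieltjesEquilibrium : Prop :=
  ∀ i, 2 * (1 - z i ^ 2) * ∑ l ∈ univ.erase i, 1 / (z i - z l) + (jacobiTau α β).eval (z i) = 0

theorem isStieltjesEquilibrium_of_orthogonal (hα : -1 < α) (hβ : -1 < β) {P : ℝ[X]}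
    (hP : P.natDegree = Fintype.card ι)
    (horth : ∀ U : ℝ[X], U.natDegree < Fintype.card ι → jacobiFunctional hα hβ (P * U) = 0)
    (hz : Function.Injective z) (hroot : ∀ i, P.eval (z i) = 0) :
    IsStieltjesEquilibrium α β z := by
  intro i
  have hσ : (1 - X ^ 2 : ℝ[X]).natDegree ≤ 2 := by compute_degree
  have hτ : (jacobiTau α β).natDegree ≤ 1 := by
    rw [jacobiTau]
    compute_degree
  simpa using stieltjes_relation (jacobiFunctional hα hβ)
    (fun R hR => (jacobiFunctional_mul_self_pos hα hβ hR).ne') hσ hτ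
    (jacobiFunctional_pearson hα hβ) hP horth hz hroot i

theorem IsStieltjesEquilibrium.boundary_terms_eq (heq : IsStieltjesEquilibrium α β z) {i : ι}
    (hi : z i ∈ Set.Ioo (-1 : ℝ) 1) :
    2 * (α + 1) * ((1 + z i) / (1 - z i)) + 2 * (β + 1) * ((1 - z i) / (1 + z i)) =
      2 * (α + β + 2) + 8 * z i * ∑ l ∈ univ.erase i, 1 / (z i - z l) := by
  have hsub : 1 - z i ≠ 0 := by linarith [hi.2]
  have hadd : 1 + z i ≠ 0 := by linarith [hi.1]
  have hforce := heq i
  simp only [jacobiTau, eval_sub, eval_mul, eval_C, eval_X] at hforce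
  field_simp
  linear_combination (-4 * z i) * hforce

end StieltjesEquilibrium

section NodeForm

open Matrix

/-- The linear map sending a polynomial `f` to the vector with entries `f (z i) √(1 - z i ^ 2)`. -/
noncomputable def weightedEval {ι : Type*} (z : ι → ℝ) : ℝ[X] →ₗ[ℝ] ι → ℝ where
  toFun f i := f.eval (z i) * √(1 - z i ^ 2)
  map_add' f g := by
    ext i
    simp [add_mul]
  map_smul' c f := by
    ext i
    simp [mul_assoc]

theorem weightedEval_apply {ι : Type*} (z : ι → ℝ) (f : ℝ[X]) (i : ι) :
    weightedEval z f i = f.eval (z i) * √(1 - z i ^ 2) :=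
  rfl

theorem one_sub_sq_pos {x : ℝ} (hx : x ∈ Set.Ioo (-1 : ℝ) 1) : 0 < 1 - x ^ 2 := by
  nlinarith [hx.1, hx.2]

variable {ι : Type*} [Fintype ι] {z : ι → ℝ}

variable (z) in
/-- The inner product of polynomials in `L²` of the discrete measure `∑ i, (1 - z i ^ 2) δ_{z i}`,
for nodes `z i` in `(-1, 1)`, realised as the dot product of weighted evaluation vectors. -/
noncomputable def nodeForm : LinearMap.BilinForm ℝ ℝ[X] :=
  (dotProductBilin ℝ ℝ).compl₁₂ (weightedEval z) (weightedEval z)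

theorem nodeForm_eq_dotProduct (f g : ℝ[X]) :
    nodeForm z f g = weightedEval z f ⬝ᵥ weightedEval z g :=
  rfl

theorem nodeForm_eq_sum (hmem : ∀ i, z i ∈ Set.Ioo (-1 : ℝ) 1) (f g : ℝ[X]) :
    nodeForm z f g = ∑ i, f.eval (z i) * g.eval (z i) * (1 - z i ^ 2) := by
  refine sum_congr rfl fun i _ => ?_
  rw [weightedEval_apply, weightedEval_apply, mul_mul_mul_comm,
    mul_self_sqrt (one_sub_sq_pos (hmem i)).le]

theorem isSymm_nodeForm : (nodeForm z).IsSymm :=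
  ⟨fun f g => dotProduct_comm (weightedEval z f) (weightedEval z g)⟩

theorem nodeForm_self_pos (hz : Function.Injective z) (hmem : ∀ i, z i ∈ Set.Ioo (-1 : ℝ) 1)
    {f : ℝ[X]} (hf : f ∈ degreeLT ℝ (Fintype.card ι)) (hf0 : f ≠ 0) : 0 < nodeForm z f f := by
  obtain ⟨i, hi⟩ : ∃ i, f.eval (z i) ≠ 0 := by
    by_contra! hzero
    exact hf0 (eq_zero_of_degree_lt_of_eval_index_eq_zero univ hz.injOn
      (by simpa using mem_degreeLT.1 hf) fun i _ => hzero i)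
  rw [nodeForm_eq_sum hmem]
  exact sum_pos' (fun j _ => mul_nonneg (mul_self_nonneg _) (one_sub_sq_pos (hmem j)).le)
    ⟨i, mem_univ i, mul_pos (mul_self_pos.2 hi) (one_sub_sq_pos (hmem i))⟩

end NodeForm

section TrigJacobiMatrix

open Matrix

variable {ι : Type*} [Fintype ι] {α β : ℝ} {z : ι → ℝ}

variable (α β z) in
/-- The polynomial operator which, at a Stieltjes equilibrium `z`, is intertwined with the matrix
`trigJacobiMatrix α β z` by `weightedEval z`. -/
noncomputable def trigJacobiOperator (f : ℝ[X]) : ℝ[X] :=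
  C 2 * derivative (derivative ((1 - X ^ 2) * f)
    - C 2 * ∑ l, ((1 - X ^ 2) * f) /ₘ (X - C (z l)) - jacobiTau α β * f)

variable (α β z) in
theorem coeff_trigJacobiOperator (f : ℝ[X]) (k : ℕ) (hf : f.natDegree ≤ k) :
    (trigJacobiOperator α β z f).coeff k =
      2 * (k + 1) * (2 * Fintype.card ι + α + β + 1 - (k + 1)) * f.coeff k := by
  have hvanish : ∀ m, k < m → f.coeff m = 0 := fun m hm =>
    coeff_eq_zero_of_natDegree_lt (hf.trans_lt hm)
  have hdeg : ((1 - X ^ 2) * f).natDegree ≤ k + 1 + 1 := by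
    have hσ : (1 - X ^ 2 : ℝ[X]).natDegree ≤ 2 := by compute_degree
    exact natDegree_mul_le.trans (by lia)
  have hσ : ((1 - X ^ 2) * f).coeff (k + 1 + 1) = -f.coeff k := by
    rw [sub_mul, one_mul, coeff_sub, hvanish _ (by lia), coeff_X_pow_mul, zero_sub]
  have hτ : (jacobiTau α β * f).coeff (k + 1) = -(α + β + 2) * f.coeff k := by
    rw [jacobiTau, sub_mul, mul_assoc, coeff_sub, coeff_C_mul, coeff_C_mul, coeff_X_mul,
      hvanish _ (by lia)]
    ring
  rw [trigJacobiOperator, coeff_C_mul, coeff_derivative, coeff_sub, coeff_sub, coeff_derivative,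
    coeff_C_mul, finsetSum_coeff]
  simp only [coeff_divByMonic_X_sub_C_of_natDegree_le hdeg, hσ, hτ, sum_const, card_univ,
    nsmul_eq_mul]
  push_cast
  ring

variable [DecidableEq ι]

theorem eval_trigJacobiOperator (hz : Function.Injective z)
    (heq : IsStieltjesEquilibrium α β z) (f : ℝ[X]) {i : ι} (hi : z i ∈ Set.Ioo (-1 : ℝ) 1) :
    (trigJacobiOperator α β z f).eval (z i) =
      4 * ∑ l ∈ univ.erase i,
        ((1 - z i ^ 2) * f.eval (z i) - (1 - z l ^ 2) * f.eval (z l)) / (z i - z l) ^ 2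
      + (2 * (α + 1) * ((1 + z i) / (1 - z i)) + 2 * (β + 1) * ((1 - z i) / (1 + z i)))
        * f.eval (z i) := by
  have hsum := two_mul_sum_erase_eval_sub_eval_div_sq univ hz ((1 - X ^ 2) * f) (mem_univ i)
  simp only [eval_mul, eval_sub, eval_one, eval_pow, eval_X] at hsum
  have hforce := heq i
  simp only [jacobiTau, eval_sub, eval_mul, eval_C, eval_X] at hforce
  have hσ : (derivative ((1 - X ^ 2) * f)).eval (z i) =
      -2 * z i * f.eval (z i) + (1 - z i ^ 2) * (derivative f).eval (z i) := by
    simp [one_add_one_eq_two]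
  have hτ : (derivative (jacobiTau α β * f)).eval (z i) = -(α + β + 2) * f.eval (z i)
      + (β - α - (α + β + 2) * z i) * (derivative f).eval (z i) := by
    simp [jacobiTau]
  rw [heq.boundary_terms_eq hi, trigJacobiOperator, derivative_sub, derivative_sub,
    derivative_C_mul, derivative_sum]
  simp only [eval_mul, eval_sub, eval_finsetSum, eval_C, hτ]
  rw [hσ] at hsum
  linear_combination (-2) * hsum - 2 * (derivative f).eval (z i) * hforce

variable (α β z) in
/-- The matrix `S̃` attached to the nodes `z`, which in the theorem are the zeros of a Jacobi
polynomial. -/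
noncomputable def trigJacobiMatrix : Matrix ι ι ℝ :=
  Matrix.of fun i j =>
    if i = j then
      4 * (∑ l ∈ univ.erase j, (1 - z j ^ 2) / (z j - z l) ^ 2) +
        2 * (α + 1) * ((1 + z j) / (1 - z j)) + 2 * (β + 1) * ((1 - z j) / (1 + z j))
    else -4 * √((1 - z i ^ 2) * (1 - z j ^ 2)) / (z i - z j) ^ 2

theorem isSymm_trigJacobiMatrix : (trigJacobiMatrix α β z).IsSymm := by
  ext i j
  rcases eq_or_ne i j with rfl | hij
  · rfl
  · simp only [trigJacobiMatrix, transpose_apply, of_apply, if_neg hij, if_neg hij.symm,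
      mul_comm (1 - z j ^ 2), sub_sq_comm (z j)]

theorem trigJacobiMatrix_mulVec_mul_sqrt (hmem : ∀ i, z i ∈ Set.Ioo (-1 : ℝ) 1) (u : ι → ℝ)
    (i : ι) :
    (trigJacobiMatrix α β z *ᵥ fun j => u j * √(1 - z j ^ 2)) i =
      (4 * ∑ l ∈ univ.erase i,
        ((1 - z i ^ 2) * u i - (1 - z l ^ 2) * u l) / (z i - z l) ^ 2
      + (2 * (α + 1) * ((1 + z i) / (1 - z i)) + 2 * (β + 1) * ((1 - z i) / (1 + z i))) * u i)
        * √(1 - z i ^ 2) := by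
  have hoff : ∀ l ∈ univ.erase i, trigJacobiMatrix α β z i l * (u l * √(1 - z l ^ 2)) =
      -4 * √(1 - z i ^ 2) * ((1 - z l ^ 2) * u l / (z i - z l) ^ 2) := by
    intro l hl
    rw [trigJacobiMatrix, of_apply, if_neg (ne_of_mem_erase hl).symm,
      sqrt_mul (one_sub_sq_pos (hmem i)).le]
    linear_combination (-4 * √(1 - z i ^ 2) * u l / (z i - z l) ^ 2) *
      mul_self_sqrt (one_sub_sq_pos (hmem l)).le
  rw [mulVec, dotProduct, ← add_sum_erase _ _ (mem_univ i), sum_congr rfl hoff, ← mul_sum,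
    trigJacobiMatrix, of_apply, if_pos rfl]
  simp only [sub_div, sum_sub_distrib, mul_div_right_comm _ (u i), ← sum_mul]
  ring

theorem trigJacobiMatrix_mulVec_weightedEval (hz : Function.Injective z)
    (hmem : ∀ i, z i ∈ Set.Ioo (-1 : ℝ) 1) (heq : IsStieltjesEquilibrium α β z) (f : ℝ[X]) :
    trigJacobiMatrix α β z *ᵥ weightedEval z f = weightedEval z (trigJacobiOperator α β z f) := by
  ext i
  rw [weightedEval_apply, eval_trigJacobiOperator hz heq f (hmem i)]
  exact trigJacobiMatrix_mulVec_mul_sqrt hmem (fun j => f.eval (z j)) i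

theorem isAdjointPair_nodeForm_trigJacobiOperator (hz : Function.Injective z)
    (hmem : ∀ i, z i ∈ Set.Ioo (-1 : ℝ) 1) (heq : IsStieltjesEquilibrium α β z) :
    (nodeForm z).IsAdjointPair (nodeForm z) (trigJacobiOperator α β z)
      (trigJacobiOperator α β z) := by
  intro f g
  rw [nodeForm_eq_dotProduct, nodeForm_eq_dotProduct,
    ← trigJacobiMatrix_mulVec_weightedEval hz hmem heq,
    ← trigJacobiMatrix_mulVec_weightedEval hz hmem heq, dotProduct_mulVec,
    ← mulVec_transpose, isSymm_trigJacobiMatrix.eq]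

end TrigJacobiMatrix

end TrigJacobi

theorem trig_jacobi_matrix_eigenvectors
    (N : ℕ) (hN : 1 ≤ N) (α β : ℝ) (hα : -1 < α) (hβ : -1 < β)
    (P : Polynomial ℝ) (hPdeg : P.natDegree = N)
    (hPorth : ∀ Q : Polynomial ℝ, Q.natDegree < N →
      ∫ x in Set.Ioo (-1 : ℝ) 1,
        P.eval x * Q.eval x * (1 - x) ^ α * (1 + x) ^ β = 0)
    (hPone : P.eval 1 = (∏ j ∈ Finset.range N, (α + 1 + j)) / (N.factorial : ℝ))
    (z : Fin N → ℝ) (hzmono : StrictMono z)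
    (hzroot : ∀ i, P.eval (z i) = 0)
    (hzmem : ∀ i, z i ∈ Set.Ioo (-1 : ℝ) 1)
    (S : Matrix (Fin N) (Fin N) ℝ)
    (hS : S = Matrix.of fun i j =>
      if i = j then
        4 * (∑ l ∈ Finset.univ.erase j, (1 - z j ^ 2) / (z j - z l) ^ 2) +
          2 * (α + 1) * ((1 + z j) / (1 - z j)) + 2 * (β + 1) * ((1 - z j) / (1 + z j))
      else -4 * Real.sqrt ((1 - z i ^ 2) * (1 - z j ^ 2)) / (z i - z j) ^ 2)
    : ∃ q : Fin N → Polynomial ℝ,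
      (∀ k : Fin N, (q k).natDegree = (k : ℕ)) ∧
      (∀ k l : Fin N,
        (∑ i, (q k).eval (z i) * (q l).eval (z i) * (1 - z i ^ 2)) =
          if k = l then 1 else 0) ∧
      (∀ k : Fin N,
        S.mulVec (fun i => (q k).eval (z i) * Real.sqrt (1 - z i ^ 2)) =
          (2 * ((k : ℝ) + 1) * (2 * (N : ℝ) + α + β + 1 - ((k : ℝ) + 1))) •
            fun i => (q k).eval (z i) * Real.sqrt (1 - z i ^ 2)) := by
  have hz : Function.Injective z := hzmono.injective
  have heq : TrigJacobi.IsStieltjesEquilibrium α β z :=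
    TrigJacobi.isStieltjesEquilibrium_of_orthogonal hα hβ (by simpa using hPdeg)
      (fun U hU => by
        simpa [TrigJacobi.jacobiFunctional_apply] using hPorth U (by simpa using hU)) hz hzroot
  obtain ⟨q, hdeg, horth, heig⟩ := TrigJacobi.exists_orthonormal_eigenpolynomials
    TrigJacobi.isSymm_nodeForm
    (fun f hf => TrigJacobi.nodeForm_self_pos hz hzmem (by simpa using hf))
    (TrigJacobi.isAdjointPair_nodeForm_trigJacobiOperator hz hzmem heq)
    (TrigJacobi.coeff_trigJacobiOperator α β z)
  refine ⟨q, hdeg, fun k l => ?_, fun k => ?_⟩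
  · rw [← TrigJacobi.nodeForm_eq_sum hzmem, horth]
  · have hmul := TrigJacobi.trigJacobiMatrix_mulVec_weightedEval hz hzmem heq (q k)
    rw [heig, map_smul, Fintype.card_fin] at hmul
    exact hS ▸ hmul
end
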